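/- Let Ω_j be an increasing sequence of open subsets of ℂⁿ (Ω_j ⊆ Ω_{j+1}) with Ω = ∪_j Ω_j bounded. Fix z ∈ Ω and δ ∈ (0,1). If for all sufficiently large j (so that z ∈ Ω_j) the squeezing function satisfies S_{Ω_j}(z) > 1 - δ, then S_Ω(z) ≥ 1 - δ. -/

import Mathlib

open Metric Set

/-- The squeezing function of a domain Ω ⊆ ℂⁿ at z: the supremum of radii r > 0
such that some injective holomorphic map f : Ω → 𝔹ⁿ with f(z) = 0 has image
containing the ball B_r(0). -/
noncomputable def squeezingFun {n : ℕ} (Ω : Set (EuclideanSpace ℂ (Fin n)))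
    (z : EuclideanSpace ℂ (Fin n)) : ℝ :=
  sSup {r : ℝ | 0 < r ∧ ∃ f : EuclideanSpace ℂ (Fin n) → EuclideanSpace ℂ (Fin n),
    DifferentiableOn ℂ f Ω ∧ Set.InjOn f Ω ∧ f z = 0 ∧
    f '' Ω ⊆ ball 0 1 ∧ ball 0 r ⊆ f '' Ω}

/-
Suppose that `Ω j` admits embeddings `f j` into the unit ball with `f j z = 0` whose images contain
the ball `B` of radius `r = 1 - δ`, and let `g j : B → Ω j` be their inverses. By Montel's theorem
`f j → F` on the union `O` of the `Ω j` and `g j → G` on `B`, locally uniformly along an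
ultrafilter. Where `F ∘ G = id`, the chain rule gives `det F' * det G' = 1`, in particular at the
origin. By Osgood's theorem the Jacobian determinants of the `f j` and `g j` do not vanish, so by
Hurwitz's theorem those of `F` on the component `V` of `z` in `O` and of `G` on `B` do not vanish
either. A limit with surjective derivative is approximated by open maps in a quantitative way, which
makes `F` injective on `V` and forces `G` to take its values in `O`, hence in `V`. Therefore `F`
embeds `V` into the unit ball with image containing `B`. The other components of `O` are absorbed by
shrinking `F` by a factor `t < 1` and mapping them affinely into the shell `t < ‖w‖ < 1` that
becomes free; let `t → 1`.

Osgood's theorem goes by induction on the dimension. Where `f' ≠ 0`, one restricts `f` to a level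
set of one of its components. Hence `f' = 0` wherever `det f' = 0`; if such points exist, then
`det f'` vanishes on a smooth hypersurface, along which `f` would be constant.
-/

open Filter Topology

theorem mapsTo_closedBall_two_mul_of_norm_le {X F : Type*} [PseudoMetricSpace X]
    [SeminormedAddCommGroup F] {f : X → F} {c : X} {r M : ℝ} (hr : 0 < r)
    (hM : ∀ y ∈ ball c r, ‖f y‖ ≤ M) : MapsTo f (ball c r) (closedBall (f c) (2 * M)) := by
  intro y hy
  rw [mem_closedBall, dist_eq_norm]
  linarith [norm_sub_le (f y) (f c), hM y hy, hM c (mem_ball_self hr)]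

section CauchyEstimates

variable {E F : Type*} [NormedAddCommGroup E] [NormedSpace ℂ E] [NormedAddCommGroup F]
  [NormedSpace ℂ F] {f : E → F} {c : E} {r M : ℝ}

theorem norm_sub_le_of_norm_le_on_ball (hd : DifferentiableOn ℂ f (ball c r))
    (hM : ∀ y ∈ ball c r, ‖f y‖ ≤ M) {y : E} (hy : y ∈ ball c r) :
    ‖f y - f c‖ ≤ 2 * M / r * ‖y - c‖ := by
  simpa only [dist_eq_norm] using Complex.dist_le_div_mul_dist_of_mapsTo_ball hd
    (mapsTo_closedBall_two_mul_of_norm_le (pos_of_mem_ball hy) hM) hy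

theorem norm_fderiv_le_of_norm_le_on_ball (hr : 0 < r) (hd : DifferentiableOn ℂ f (ball c r))
    (hM : ∀ y ∈ ball c r, ‖f y‖ ≤ M) : ‖fderiv ℂ f c‖ ≤ 2 * M / r :=
  Complex.norm_fderiv_le_div_of_mapsTo_ball hd (mapsTo_closedBall_two_mul_of_norm_le hr hM) hr

end CauchyEstimates

theorem eventually_prod_nhds_iff_ball {ι X : Type*} [PseudoMetricSpace X] {l : Filter ι} {x : X}
    {P : ι → X → Prop} :
    (∀ᶠ p in l ×ˢ 𝓝 x, P p.1 p.2) ↔ ∃ r > 0, ∀ᶠ i in l, ∀ y ∈ ball x r, P i y := by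
  rw [(l.basis_sets.prod nhds_basis_ball).eventually_iff]
  constructor
  · rintro ⟨⟨s, r⟩, ⟨hs, hr⟩, h⟩
    exact ⟨r, hr, mem_of_superset hs fun i hi y hy ↦ h (mk_mem_prod hi hy)⟩
  · rintro ⟨r, hr, h⟩
    exact ⟨⟨{i | ∀ y ∈ ball x r, P i y}, r⟩, ⟨h, hr⟩, fun p hp ↦ hp.1 p.2 hp.2⟩

theorem eventually_forall_mem_of_isCompact {ι X : Type*} [TopologicalSpace X] {l : Filter ι}
    {K : Set X} (hK : IsCompact K) {P : ι → X → Prop}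
    (h : ∀ x ∈ K, ∀ᶠ p in l ×ˢ 𝓝 x, P p.1 p.2) : ∀ᶠ i in l, ∀ y ∈ K, P i y :=
  (Eventually.curry (hK.mem_prod_nhdsSet_of_forall h)).mono fun _ hi ↦ hi.self_of_nhdsSet

/-- The functions `f i` are eventually holomorphic near every point of `U` and converge there
locally uniformly to `g` along `l`. Local uniform convergence is encoded as continuous convergence,
`f i x' → g x` as `i` tends to `l` and `x'` to `x`; no `f i` has to be holomorphic on all of `U`,
so that the domains may exhaust `U`. -/
structure HolomorphicLimitOn {ι E F : Type*} [NormedAddCommGroup E] [NormedSpace ℂ E]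
    [NormedAddCommGroup F] [NormedSpace ℂ F] (l : Filter ι) (f : ι → E → F) (g : E → F)
    (U : Set E) : Prop where
  eventually_differentiableAt : ∀ x ∈ U, ∀ᶠ p in l ×ˢ 𝓝 x, DifferentiableAt ℂ (f p.1) p.2
  tendsto : ∀ x ∈ U, Tendsto (fun p : ι × E ↦ f p.1 p.2) (l ×ˢ 𝓝 x) (𝓝 (g x))

namespace HolomorphicLimitOn

section Basic

variable {ι κ E F G : Type*} [NormedAddCommGroup E] [NormedSpace ℂ E] [NormedAddCommGroup F]
  [NormedSpace ℂ F] [NormedAddCommGroup G] [NormedSpace ℂ G] {l : Filter ι} {f : ι → E → F}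
  {g : E → F} {U V : Set E} {x : E}

theorem mono (h : HolomorphicLimitOn l f g U) (hVU : V ⊆ U) : HolomorphicLimitOn l f g V :=
  ⟨fun x hx ↦ h.1 x (hVU hx), fun x hx ↦ h.2 x (hVU hx)⟩

theorem comp_tendsto {m : Filter κ} {u : κ → ι} (h : HolomorphicLimitOn l f g U)
    (hu : Tendsto u m l) : HolomorphicLimitOn m (fun k ↦ f (u k)) g U :=
  ⟨fun x hx ↦ (hu.prodMap tendsto_id).eventually (h.1 x hx),
    fun x hx ↦ (h.2 x hx).comp (hu.prodMap tendsto_id)⟩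

theorem comp_right {u : G → E} {V : Set G} (h : HolomorphicLimitOn l f g U)
    (hu : Differentiable ℂ u) (huV : MapsTo u V U) :
    HolomorphicLimitOn l (fun i ↦ f i ∘ u) (g ∘ u) V :=
  ⟨fun x hx ↦ ((tendsto_id.prodMap (hu.continuous.tendsto x)).eventually
      (h.1 (u x) (huV hx))).mono fun p hp ↦ hp.comp p.2 (hu p.2),
    fun x hx ↦ (h.2 (u x) (huV hx)).comp (tendsto_id.prodMap (hu.continuous.tendsto x))⟩

theorem tendsto_comp {u : ι → E} (h : HolomorphicLimitOn l f g U) (hx : x ∈ U)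
    (hu : Tendsto u l (𝓝 x)) : Tendsto (fun i ↦ f i (u i)) l (𝓝 (g x)) :=
  (h.2 x hx).comp (tendsto_id.prodMk hu)

theorem tendsto_apply (h : HolomorphicLimitOn l f g U) (hx : x ∈ U) :
    Tendsto (fun i ↦ f i x) l (𝓝 (g x)) :=
  h.tendsto_comp hx tendsto_const_nhds

theorem continuousAt [l.NeBot] (h : HolomorphicLimitOn l f g U) (hU : IsOpen U) (hx : x ∈ U) :
    ContinuousAt g x := by
  refine (closed_nhds_basis (g x)).tendsto_right_iff.2 fun V hV ↦ ?_
  filter_upwards [(eventually_swap_iff.1 ((h.2 x hx).eventually_mem hV.1)).curry,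
    hU.mem_nhds hx] with y hy hyU
  exact hV.2.mem_of_tendsto (h.tendsto_apply hyU) hy

theorem sub {f₂ : ι → E → F} {g₂ : E → F} (h : HolomorphicLimitOn l f g U)
    (h₂ : HolomorphicLimitOn l f₂ g₂ U) :
    HolomorphicLimitOn l (fun i ↦ f i - f₂ i) (g - g₂) U :=
  ⟨fun x hx ↦ (h.1 x hx).mp ((h₂.1 x hx).mono fun _ hp₂ hp ↦ hp.sub hp₂),
    fun x hx ↦ (h.2 x hx).sub (h₂.2 x hx)⟩

theorem const (l : Filter ι) (hU : IsOpen U) (hg : DifferentiableOn ℂ g U) :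
    HolomorphicLimitOn l (fun _ ↦ g) g U where
  eventually_differentiableAt _ hx := tendsto_snd.eventually <|
    (hU.eventually_mem hx).mono fun _ hy ↦ hg.differentiableAt (hU.mem_nhds hy)
  tendsto _ hx :=
    (hg.differentiableAt (hU.mem_nhds hx)).continuousAt.tendsto.comp tendsto_snd

theorem of_tendsto_apply (hf : ∀ x ∈ U, ∀ᶠ p in l ×ˢ 𝓝 x, DifferentiableAt ℂ (f p.1) p.2)
    (hM : ∀ x ∈ U, ∃ M, ∀ᶠ p in l ×ˢ 𝓝 x, ‖f p.1 p.2‖ ≤ M)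
    (hg : ∀ x ∈ U, Tendsto (fun i ↦ f i x) l (𝓝 (g x))) : HolomorphicLimitOn l f g U where
  eventually_differentiableAt := hf
  tendsto x hx := by
    obtain ⟨M, hM⟩ := hM x hx
    obtain ⟨r, hr, hball⟩ :=
      eventually_prod_nhds_iff_ball (P := fun i y ↦ DifferentiableAt ℂ (f i) y ∧ ‖f i y‖ ≤ M).1
        ((hf x hx).and hM)
    have hlip : ∀ᶠ p in l ×ˢ 𝓝 x, ‖f p.1 p.2 - f p.1 x‖ ≤ 2 * M / r * ‖p.2 - x‖ :=
      eventually_prod_nhds_iff_ball (P := fun i y ↦ ‖f i y - f i x‖ ≤ 2 * M / r * ‖y - x‖).2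
        ⟨r, hr, hball.mono fun i hi y ↦ norm_sub_le_of_norm_le_on_ball
          (fun w hw ↦ (hi w hw).1.differentiableWithinAt) fun w hw ↦ (hi w hw).2⟩
    have hzero : Tendsto (fun p : ι × E ↦ 2 * M / r * ‖p.2 - x‖) (l ×ˢ 𝓝 x) (𝓝 0) :=
      (Continuous.tendsto' (f := fun y : E ↦ 2 * M / r * ‖y - x‖) (by fun_prop) x 0
        (by simp)).comp tendsto_snd
    simpa using (squeeze_zero_norm' hlip hzero).add ((hg x hx).comp tendsto_fst)

theorem exists_of_bounded [ProperSpace F] {l : Ultrafilter ι}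
    (hf : ∀ x ∈ U, ∀ᶠ p in (l : Filter ι) ×ˢ 𝓝 x, DifferentiableAt ℂ (f p.1) p.2)
    (hM : ∀ x ∈ U, ∃ M, ∀ᶠ p in (l : Filter ι) ×ˢ 𝓝 x, ‖f p.1 p.2‖ ≤ M) :
    ∃ g, HolomorphicLimitOn l f g U := by
  have hlim : ∀ x, ∃ a, x ∈ U → Tendsto (fun i ↦ f i x) l (𝓝 a) := by
    intro x
    by_cases hx : x ∈ U
    · obtain ⟨M, hM⟩ := hM x hx
      have hbound : ∀ᶠ i in l, f i x ∈ closedBall 0 M :=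
        hM.curry.mono fun i hi ↦ mem_closedBall_zero_iff.2 hi.self_of_nhds
      obtain ⟨a, -, ha⟩ := (isCompact_closedBall (0 : F) M).ultrafilter_le_nhds
        (l.map fun i ↦ f i x) (le_principal_iff.2 hbound)
      exact ⟨a, fun _ ↦ ha⟩
    · exact ⟨0, fun hx' ↦ absurd hx' hx⟩
  choose g hg using hlim
  exact ⟨g, of_tendsto_apply hf hM hg⟩

end Basic

section Weierstrass

variable {ι E F : Type*} [NormedAddCommGroup E] [NormedSpace ℂ E] [FiniteDimensional ℂ E]
  [NormedAddCommGroup F] [NormedSpace ℂ F] {l : Filter ι} {f : ι → E → F} {g : E → F}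
  {U : Set E} {x : E}

theorem tendsto_fderiv_zero (h : HolomorphicLimitOn l f 0 U) (hU : IsOpen U) (hx : x ∈ U) :
    Tendsto (fun p : ι × E ↦ fderiv ℂ (f p.1) p.2) (l ×ˢ 𝓝 x) (𝓝 0) := by
  have := FiniteDimensional.proper ℂ E
  obtain ⟨r, hr, hrU⟩ := nhds_basis_closedBall.mem_iff.1 (hU.mem_nhds hx)
  refine NormedAddGroup.tendsto_nhds_zero.2 fun ε hε ↦ ?_
  have hsmall : ∀ᶠ i in l, ∀ y ∈ closedBall x r,
      DifferentiableAt ℂ (f i) y ∧ ‖f i y‖ < ε * r / 8 :=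
    eventually_forall_mem_of_isCompact (isCompact_closedBall x r) fun y hy ↦
      (h.1 y (hrU hy)).and <|
        NormedAddGroup.tendsto_nhds_zero.1 (h.2 y (hrU hy)) _ (by positivity)
  refine eventually_prod_nhds_iff_ball (P := fun i y ↦ ‖fderiv ℂ (f i) y‖ < ε).2
    ⟨r / 2, half_pos hr, hsmall.mono fun i hi y hy ↦ ?_⟩
  have hsub : ball y (r / 2) ⊆ closedBall x r :=
    (ball_subset_ball' (by linarith [mem_ball.1 hy])).trans ball_subset_closedBall
  calc ‖fderiv ℂ (f i) y‖ ≤ 2 * (ε * r / 8) / (r / 2) :=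
        norm_fderiv_le_of_norm_le_on_ball (half_pos hr)
          (fun w hw ↦ (hi w (hsub hw)).1.differentiableWithinAt) fun w hw ↦ (hi w (hsub hw)).2.le
    _ = ε / 2 := by field_simp; ring
    _ < ε := half_lt_self hε

theorem tendsto_fderiv_sub_fderiv {f₂ : ι → E → F} (h : HolomorphicLimitOn l f g U)
    (h₂ : HolomorphicLimitOn l f₂ g U) (hU : IsOpen U) (hx : x ∈ U) :
    Tendsto (fun p : ι × E ↦ fderiv ℂ (f p.1) p.2 - fderiv ℂ (f₂ p.1) p.2) (l ×ˢ 𝓝 x)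
      (𝓝 0) := by
  have hsub := h.sub h₂
  rw [sub_self] at hsub
  refine (hsub.tendsto_fderiv_zero hU hx).congr' ?_
  filter_upwards [h.1 x hx, h₂.1 x hx] with p hp hp₂ using fderiv_sub hp hp₂

theorem uniformCauchySeqOnFilter_fderiv (h : HolomorphicLimitOn l f g U) (hU : IsOpen U)
    (hx : x ∈ U) : UniformCauchySeqOnFilter (fun i ↦ fderiv ℂ (f i)) l (𝓝 x) := by
  intro u hu
  have hlim := (h.comp_tendsto tendsto_snd).tendsto_fderiv_sub_fderiv
    (h.comp_tendsto (tendsto_fst (g := l))) hU hx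
  rw [uniformity_eq_comap_nhds_zero] at hu
  obtain ⟨s, hs, hsu⟩ := hu
  exact (hlim.eventually_mem hs).mono fun _ hp ↦ hsu hp

theorem exists_tendsto_fderiv [l.NeBot] [CompleteSpace F] (h : HolomorphicLimitOn l f g U)
    (hU : IsOpen U) (hx : x ∈ U) : ∃ A, Tendsto (fun i ↦ fderiv ℂ (f i) x) l (𝓝 A) :=
  cauchy_map_iff_exists_tendsto.1 <| cauchy_map_iff'.2 fun u hu ↦
    (h.uniformCauchySeqOnFilter_fderiv hU hx u hu).curry.mono fun _ hp ↦ hp.self_of_nhds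

theorem differentiableOn [l.NeBot] [CompleteSpace F] (h : HolomorphicLimitOn l f g U)
    (hU : IsOpen U) : DifferentiableOn ℂ g U := by
  have hlim : ∀ y, ∃ A, y ∈ U → Tendsto (fun i ↦ fderiv ℂ (f i) y) l (𝓝 A) := by
    intro y
    by_cases hy : y ∈ U
    · obtain ⟨A, hA⟩ := h.exists_tendsto_fderiv hU hy
      exact ⟨A, fun _ ↦ hA⟩
    · exact ⟨0, fun hy' ↦ absurd hy' hy⟩
  choose A hA using hlim
  intro x hx
  have hU' : ∀ᶠ y in 𝓝 x, y ∈ U := hU.mem_nhds hx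
  have hunif : TendstoUniformlyOnFilter (fun i ↦ fderiv ℂ (f i)) A l (𝓝 x) :=
    (h.uniformCauchySeqOnFilter_fderiv hU hx).tendstoUniformlyOnFilter_of_tendsto
      (hU'.mono hA)
  exact (hasFDerivAt_of_tendstoUniformlyOnFilter hunif
    ((h.1 x hx).mono fun _ hp ↦ hp.hasFDerivAt)
    (hU'.mono fun _ hy ↦ h.tendsto_apply hy)).differentiableAt.differentiableWithinAt

end Weierstrass

end HolomorphicLimitOn

section Smoothness

variable {E F : Type*} [NormedAddCommGroup E] [NormedSpace ℂ E] [NormedAddCommGroup F]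
  [NormedSpace ℂ F] {f : E → F} {U : Set E} {x : E}

theorem holomorphicLimitOn_translate (hU : IsOpen U) (hf : DifferentiableOn ℂ f U) :
    HolomorphicLimitOn (𝓝 0) (fun v y ↦ f (y + v)) f U := by
  have hadd : ∀ x, Tendsto (fun p : E × E ↦ p.2 + p.1) (𝓝 0 ×ˢ 𝓝 x) (𝓝 x) := fun x ↦ by
    simpa using (tendsto_snd (f := 𝓝 (0 : E)) (g := 𝓝 x)).add tendsto_fst
  refine ⟨fun x hx ↦ ?_, fun x hx ↦ ?_⟩
  · filter_upwards [(hadd x).eventually_mem (hU.mem_nhds hx)] with p hp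
    exact (hf.differentiableAt (hU.mem_nhds hp)).comp p.2 (differentiableAt_id.add_const p.1)
  · exact (hf.differentiableAt (hU.mem_nhds hx)).continuousAt.tendsto.comp (hadd x)

variable [FiniteDimensional ℂ E]

theorem continuousAt_fderiv_of_differentiableOn (hU : IsOpen U) (hf : DifferentiableOn ℂ f U)
    (hx : x ∈ U) : ContinuousAt (fderiv ℂ f) x := by
  have hlim := ((holomorphicLimitOn_translate hU hf).tendsto_fderiv_sub_fderiv
    (.const (𝓝 0) hU hf) hU hx).comp (tendsto_id.prodMk (tendsto_const_nhds (x := x)))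
  rw [ContinuousAt, ← map_add_left_nhds_zero x, tendsto_map'_iff, ← tendsto_sub_nhds_zero_iff]
  simpa [Function.comp_def, fderiv_comp_add_right] using hlim

theorem hasStrictFDerivAt_of_differentiableOn (hU : IsOpen U) (hf : DifferentiableOn ℂ f U)
    (hx : x ∈ U) : HasStrictFDerivAt f (fderiv ℂ f x) x :=
  hasStrictFDerivAt_of_hasFDerivAt_of_continuousAt
    ((hU.eventually_mem hx).mono fun _ hy ↦ (hf.differentiableAt (hU.mem_nhds hy)).hasFDerivAt)
    (continuousAt_fderiv_of_differentiableOn hU hf hx)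

theorem holomorphicLimitOn_slope (hU : IsOpen U) (hf : DifferentiableOn ℂ f U) (v : E) :
    HolomorphicLimitOn (𝓝[≠] (0 : ℂ)) (fun t y ↦ t⁻¹ • (f (y + t • v) - f y))
      (fun y ↦ fderiv ℂ f y v) U := by
  have hadd : ∀ x, Tendsto (fun p : ℂ × E ↦ p.2 + p.1 • v) (𝓝[≠] 0 ×ˢ 𝓝 x) (𝓝 x) := fun x ↦ by
    have hcont : Continuous fun p : ℂ × E ↦ p.2 + p.1 • v := by fun_prop
    refine (hcont.tendsto' (0, x) x (by simp)).mono_left ?_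
    rw [nhds_prod_eq]
    exact Filter.prod_mono_left _ nhdsWithin_le_nhds
  refine ⟨fun x hx ↦ ?_, fun x hx ↦ ?_⟩
  · filter_upwards [(hadd x).eventually_mem (hU.mem_nhds hx),
      tendsto_snd.eventually_mem (hU.mem_nhds hx)] with p hp hp'
    exact (((hf.differentiableAt (hU.mem_nhds hp)).comp p.2
      (differentiableAt_id.add_const _)).sub (hf.differentiableAt (hU.mem_nhds hp'))).const_smul _
  · have hpair : Tendsto (fun p : ℂ × E ↦ (p.2 + p.1 • v, p.2)) (𝓝[≠] 0 ×ˢ 𝓝 x) (𝓝 (x, x)) :=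
      (hadd x).prodMk_nhds tendsto_snd
    have hbigO : (fun p : ℂ × E ↦ p.2 + p.1 • v - p.2) =O[𝓝[≠] 0 ×ˢ 𝓝 x] Prod.fst :=
      .of_bound ‖v‖ (.of_forall fun p ↦ by simp [norm_smul, mul_comm])
    have hlittle := (((hasStrictFDerivAt_of_differentiableOn hU hf hx).isLittleO.comp_tendsto
      hpair).trans_isBigO hbigO).tendsto_inv_smul_nhds_zero
    have hne : ∀ᶠ p : ℂ × E in 𝓝[≠] 0 ×ˢ 𝓝 x, p.1 ≠ 0 :=
      tendsto_fst.eventually eventually_mem_nhdsWithin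
    rw [← tendsto_sub_nhds_zero_iff]
    refine hlittle.congr' (hne.mono fun p hp ↦ ?_)
    simp [smul_sub, hp]

variable [CompleteSpace F]

theorem differentiableOn_fderiv_apply (hU : IsOpen U) (hf : DifferentiableOn ℂ f U) (v : E) :
    DifferentiableOn ℂ (fun x ↦ fderiv ℂ f x v) U :=
  (holomorphicLimitOn_slope hU hf v).differentiableOn hU

theorem contDiffOn_nat_of_differentiableOn (hU : IsOpen U) (hf : DifferentiableOn ℂ f U) (n : ℕ) :
    ContDiffOn ℂ n f U := by
  induction n generalizing f with
  | zero => exact contDiffOn_zero.2 hf.continuousOn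
  | succ n ih =>
    refine contDiffOn_succ_of_fderiv_apply (n := n) hf (by simp) fun v ↦ ?_
    exact (ih (differentiableOn_fderiv_apply hU hf v)).congr fun y hy ↦ by
      rw [fderivWithin_of_isOpen hU hy]

theorem differentiableOn_fderiv (hU : IsOpen U) (hf : DifferentiableOn ℂ f U) :
    DifferentiableOn ℂ (fderiv ℂ f) U :=
  ((contDiffOn_nat_of_differentiableOn hU hf 2).fderiv_of_isOpen (m := 1) hU
    (by norm_num)).differentiableOn one_ne_zero

end Smoothness

theorem contDiff_continuousLinearMap_det {𝕜 E : Type*} [NontriviallyNormedField 𝕜] [CompleteSpace 𝕜]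
    [NormedAddCommGroup E] [NormedSpace 𝕜 E] [FiniteDimensional 𝕜 E] {n : WithTop ℕ∞} :
    ContDiff 𝕜 n (fun A : E →L[𝕜] E ↦ A.det) := by
  let b := Module.finBasis 𝕜 E
  have hentry : ∀ i j, ContDiff 𝕜 n fun A : E →L[𝕜] E ↦ b.coord i (A (b j)) := fun i j ↦
    (b.coord i).toContinuousLinearMap.contDiff.comp (contDiff_id.clm_apply contDiff_const)
  simp_rw [ContinuousLinearMap.det, ← LinearMap.det_toMatrix b, Matrix.det_apply,
    LinearMap.toMatrix_apply, Units.smul_def, ← Int.cast_smul_eq_zsmul 𝕜]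
  exact ContDiff.sum fun σ _ ↦ (contDiff_prod fun i _ ↦ hentry _ _).const_smul _

namespace HolomorphicLimitOn

variable {ι E F G : Type*} [NormedAddCommGroup E] [NormedSpace ℂ E] [NormedAddCommGroup F]
  [NormedSpace ℂ F] [NormedAddCommGroup G] [NormedSpace ℂ G]
  {l : Filter ι} {f : ι → E → F} {g : E → F} {U : Set E}

theorem differentiable_comp (h : HolomorphicLimitOn l f g U) {Φ : F → G}
    (hΦ : Differentiable ℂ Φ) : HolomorphicLimitOn l (fun i ↦ Φ ∘ f i) (Φ ∘ g) U :=
  ⟨fun x hx ↦ (h.1 x hx).mono fun p hp ↦ (hΦ _).comp p.2 hp,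
    fun x hx ↦ (hΦ.continuous.tendsto _).comp (h.2 x hx)⟩

theorem eventually_differentiableOn_ball (h : HolomorphicLimitOn l f g U) {x : E} (hx : x ∈ U) :
    ∃ r > 0, ∀ᶠ i in l, DifferentiableOn ℂ (f i) (ball x r) :=
  let ⟨r, hr, hball⟩ :=
    eventually_prod_nhds_iff_ball (P := fun i y ↦ DifferentiableAt ℂ (f i) y).1 (h.1 x hx)
  ⟨r, hr, hball.mono fun _ hi y hy ↦ (hi y hy).differentiableWithinAt⟩

variable [FiniteDimensional ℂ E] [CompleteSpace F]

protected theorem fderiv [l.NeBot] (h : HolomorphicLimitOn l f g U) (hU : IsOpen U) :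
    HolomorphicLimitOn l (fun i ↦ fderiv ℂ (f i)) (fderiv ℂ g) U where
  eventually_differentiableAt x hx := by
    obtain ⟨r, hr, hball⟩ := h.eventually_differentiableOn_ball hx
    refine eventually_prod_nhds_iff_ball (P := fun i y ↦ DifferentiableAt ℂ (fderiv ℂ (f i)) y).2
      ⟨r, hr, hball.mono fun i hi y hy ↦ ?_⟩
    exact (differentiableOn_fderiv isOpen_ball hi).differentiableAt (isOpen_ball.mem_nhds hy)
  tendsto x hx := by
    have hg := h.differentiableOn hU
    simpa using (h.tendsto_fderiv_sub_fderiv (.const l hU hg) hU hx).add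
      ((continuousAt_fderiv_of_differentiableOn hU hg hx).tendsto.comp tendsto_snd)

theorem det_fderiv {f : ι → E → E} {g : E → E} [l.NeBot] (h : HolomorphicLimitOn l f g U)
    (hU : IsOpen U) :
    HolomorphicLimitOn l (fun i x ↦ (fderiv ℂ (f i) x).det) (fun x ↦ (fderiv ℂ g x).det) U :=
  (h.fderiv hU).differentiable_comp
    ((contDiff_continuousLinearMap_det (n := 1)).differentiable one_ne_zero)

end HolomorphicLimitOn

theorem le_norm_of_forall_mem_sphere {f : ℂ → ℂ} {x : ℂ} {r c : ℝ} (hr : 0 < r) (hc : 0 < c)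
    (hd : ∀ y ∈ closedBall x r, DifferentiableAt ℂ f y) (hne : ∀ y ∈ closedBall x r, f y ≠ 0)
    (hle : ∀ y ∈ sphere x r, c ≤ ‖f y‖) : c ≤ ‖f x‖ := by
  have hcl : closure (ball x r) = closedBall x r := closure_ball x hr.ne'
  have hinv : DiffContOnCl ℂ f⁻¹ (ball x r) := DifferentiableOn.diffContOnCl <| by
    rw [hcl]
    exact fun y hy ↦ ((hd y hy).inv (hne y hy)).differentiableWithinAt
  have hbound : ‖f⁻¹ x‖ ≤ c⁻¹ :=
    Complex.norm_le_of_forall_mem_frontier_norm_le isBounded_ball hinv (fun y hy ↦ by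
      rw [frontier_ball x hr.ne'] at hy
      rw [Pi.inv_apply, norm_inv]
      exact inv_anti₀ hc (hle y hy)) (subset_closure (mem_ball_self hr))
  rw [Pi.inv_apply, norm_inv] at hbound
  exact (inv_le_inv₀ (norm_pos_iff.2 (hne x (mem_closedBall_self hr.le))) hc).1 hbound

theorem eq_zero_of_eventually_eq_zero_on_line {E F : Type*} [NormedAddCommGroup E]
    [NormedSpace ℂ E] [NormedAddCommGroup F] [NormedSpace ℂ F] [CompleteSpace F] {f : E → F}
    {x y : E} {r : ℝ} (hf : DifferentiableOn ℂ f (ball x r)) (hy : y ∈ ball x r)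
    (hzero : ∀ᶠ s : ℂ in 𝓝 0, f (x + s • (y - x)) = 0) : f y = 0 := by
  let line : ℂ → E := fun s ↦ x + s • (y - x)
  have hline : Differentiable ℂ line := by fun_prop
  have hconv : Convex ℝ (line ⁻¹' ball x r) :=
    ((convex_ball x r).translate_preimage_right x).linear_preimage
      ((LinearMap.toSpanSingleton ℂ E (y - x)).restrictScalars ℝ)
  have hmem : ∀ s, line s ∈ ball x r → s ∈ line ⁻¹' ball x r := fun _ hs ↦ hs
  have heq := ((hf.comp hline.differentiableOn fun _ hs ↦ hs).analyticOnNhd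
    (isOpen_ball.preimage hline.continuous)).eqOn_zero_of_preconnected_of_eventuallyEq_zero
    hconv.isPreconnected (hmem 0 (by simpa [line] using pos_of_mem_ball hy)) hzero
  simpa [line] using heq (hmem 1 (by simpa [line] using hy))

namespace HolomorphicLimitOn

section Hurwitz

variable {ι : Type*} {l : Filter ι} [l.NeBot]

theorem eventually_eq_zero_of_complex {f : ι → ℂ → ℂ} {g : ℂ → ℂ} {U : Set ℂ} {x : ℂ}
    (h : HolomorphicLimitOn l f g U) (hU : IsOpen U)
    (hne : ∀ y ∈ U, ∀ᶠ p in l ×ˢ 𝓝 y, f p.1 p.2 ≠ 0) (hx : x ∈ U) (hgx : g x = 0) :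
    ∀ᶠ y in 𝓝 x, g y = 0 := by
  have hg := h.differentiableOn hU
  by_contra hzero
  obtain ⟨r, hr, hball⟩ := nhds_basis_closedBall.eventually_iff.1 <| (hU.eventually_mem hx).and <|
    eventually_nhdsWithin_iff.1 <|
      (hg.analyticAt (hU.mem_nhds hx)).eventually_eq_zero_or_eventually_ne_zero.resolve_left hzero
  obtain ⟨y₀, hy₀, hmin⟩ := (isCompact_sphere x r).exists_isMinOn
    (NormedSpace.sphere_nonempty.2 hr.le) (hg.continuousOn.norm.mono fun y hy ↦
      (hball (sphere_subset_closedBall hy)).1)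
  have hpos : 0 < ‖g y₀‖ / 2 := half_pos <| norm_pos_iff.2 <|
    (hball (sphere_subset_closedBall hy₀)).2 (ne_of_mem_sphere hy₀ hr.ne')
  have hsphere : ∀ᶠ i in l, ∀ y ∈ sphere x r, ‖g y₀‖ / 2 ≤ ‖f i y‖ :=
    eventually_forall_mem_of_isCompact (isCompact_sphere x r) fun y hy ↦
      ((h.2 y (hball (sphere_subset_closedBall hy)).1).norm.eventually_const_lt
        ((half_lt_self (by linarith)).trans_le (hmin hy))).mono fun _ hp ↦ hp.le
  have hclosedBall : ∀ᶠ i in l, ∀ y ∈ closedBall x r, DifferentiableAt ℂ (f i) y ∧ f i y ≠ 0 :=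
    eventually_forall_mem_of_isCompact (isCompact_closedBall x r) fun y hy ↦
      (h.1 y (hball hy).1).and (hne y (hball hy).1)
  have hlim : ‖g y₀‖ / 2 ≤ ‖g x‖ := ge_of_tendsto (h.tendsto_apply hx).norm <| by
    filter_upwards [hsphere, hclosedBall] with i hi hi'
    exact le_norm_of_forall_mem_sphere hr hpos (fun y hy ↦ (hi' y hy).1)
      (fun y hy ↦ (hi' y hy).2) hi
  rw [hgx, norm_zero] at hlim
  exact hlim.not_gt hpos

variable {E : Type*} [NormedAddCommGroup E] [NormedSpace ℂ E] [FiniteDimensional ℂ E]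
  {f : ι → E → ℂ} {g : E → ℂ} {U : Set E} {x : E}

theorem eventually_eq_zero (h : HolomorphicLimitOn l f g U) (hU : IsOpen U)
    (hne : ∀ y ∈ U, ∀ᶠ p in l ×ˢ 𝓝 y, f p.1 p.2 ≠ 0) (hx : x ∈ U) (hgx : g x = 0) :
    ∀ᶠ y in 𝓝 x, g y = 0 := by
  obtain ⟨r, hr, hrU⟩ := Metric.isOpen_iff.1 hU x hx
  filter_upwards [ball_mem_nhds x hr] with y hy
  let line : ℂ → E := fun s ↦ x + s • (y - x)
  have hline : Differentiable ℂ line := by fun_prop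
  refine eq_zero_of_eventually_eq_zero_on_line ((h.differentiableOn hU).mono hrU) hy ?_
  exact (h.comp_right hline (V := line ⁻¹' U) fun _ hs ↦ hs).eventually_eq_zero_of_complex
    (hU.preimage hline.continuous)
    (fun s hs ↦ (tendsto_id.prodMap (hline.continuous.tendsto s)).eventually (hne _ hs))
    (by simpa [line] using hx) (by simpa [line] using hgx)

theorem ne_zero_of_isPreconnected (h : HolomorphicLimitOn l f g U) (hU : IsOpen U)
    (hconn : IsPreconnected U) (hne : ∀ y ∈ U, ∀ᶠ p in l ×ˢ 𝓝 y, f p.1 p.2 ≠ 0) {x₀ : E}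
    (hx₀ : x₀ ∈ U) (hgx₀ : g x₀ ≠ 0) : ∀ x ∈ U, g x ≠ 0 := by
  by_contra! hex
  obtain ⟨x, hx, hgx⟩ := hex
  have hsub : U ⊆ {y | ∀ᶠ w in 𝓝 y, g w = 0} := by
    refine hconn.subset_of_closure_inter_subset isOpen_setOfPred_eventually_nhds
      ⟨x, hx, h.eventually_eq_zero hU hne hx hgx⟩ fun y hy ↦ ?_
    have hgy : g y ∈ closure {0} := (h.continuousAt hU hy.2).continuousWithinAt.mem_closure hy.1
      fun w hw ↦ hw.self_of_nhds
    exact h.eventually_eq_zero hU hne hy.2 (by simpa using hgy)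
  exact hgx₀ (hsub hx₀).self_of_nhds

end Hurwitz

end HolomorphicLimitOn

/-- The `k`-th derivative of `f` at `x` in the direction `e`. -/
noncomputable def iteratedLineDeriv {E F : Type*} [NormedAddCommGroup E] [NormedSpace ℂ E]
    [NormedAddCommGroup F] [NormedSpace ℂ F] (k : ℕ) (f : E → F) (e x : E) : F :=
  iteratedDeriv k (fun t : ℂ ↦ f (x + t • e)) 0

section IteratedLineDeriv

variable {E F : Type*} [NormedAddCommGroup E] [NormedSpace ℂ E] [NormedAddCommGroup F]
  [NormedSpace ℂ F] {f : E → F} {U : Set E} {x : E}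

theorem iteratedLineDeriv_add_smul (k : ℕ) (f : E → F) (e x : E) (t : ℂ) :
    iteratedLineDeriv k f e (x + t • e) = iteratedDeriv k (fun s : ℂ ↦ f (x + s • e)) t := by
  have h := congrFun (iteratedDeriv_comp_const_add k (fun s : ℂ ↦ f (x + s • e)) t) 0
  simp only [add_smul, ← add_assoc, add_zero] at h
  exact h

theorem lineDeriv_iteratedLineDeriv (k : ℕ) (f : E → F) (e x : E) :
    lineDeriv ℂ (iteratedLineDeriv k f e) x e = iteratedLineDeriv (k + 1) f e x := by
  simp only [lineDeriv, iteratedLineDeriv_add_smul]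
  rw [iteratedLineDeriv, iteratedDeriv_succ]

theorem eventually_line_eq_zero_iff_iteratedLineDeriv [CompleteSpace F] (hU : IsOpen U)
    (hf : DifferentiableOn ℂ f U) (hx : x ∈ U) (e : E) :
    (∀ᶠ t : ℂ in 𝓝 0, f (x + t • e) = 0) ↔ ∀ k, iteratedLineDeriv k f e x = 0 := by
  have hline : Differentiable ℂ fun t : ℂ ↦ x + t • e := by fun_prop
  have han : AnalyticAt ℂ (fun t : ℂ ↦ f (x + t • e)) 0 :=
    (hf.comp hline.differentiableOn fun _ ht ↦ ht).analyticAt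
      ((hU.preimage hline.continuous).mem_nhds (by simpa using hx))
  simp only [← analyticOrderAt_eq_top, ENat.eq_top_iff_forall_ge,
    natCast_le_analyticOrderAt_iff_iteratedDeriv_eq_zero han]
  exact ⟨fun h k ↦ h (k + 1) k k.lt_succ_self, fun h _ k _ ↦ h k⟩

variable [FiniteDimensional ℂ E] [CompleteSpace F]

theorem differentiableOn_iteratedLineDeriv (hU : IsOpen U) (hf : DifferentiableOn ℂ f U) (e : E)
    (k : ℕ) : DifferentiableOn ℂ (iteratedLineDeriv k f e) U := by
  induction k with
  | zero => exact hf.congr fun x _ ↦ by simp [iteratedLineDeriv]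
  | succ k ih =>
    refine (differentiableOn_fderiv_apply hU ih e).congr fun x hx ↦ ?_
    rw [← lineDeriv_iteratedLineDeriv,
      (ih.differentiableAt (hU.mem_nhds hx)).lineDeriv_eq_fderiv]

theorem fderiv_iteratedLineDeriv_apply (hU : IsOpen U) (hf : DifferentiableOn ℂ f U) (hx : x ∈ U)
    (e : E) (k : ℕ) :
    fderiv ℂ (iteratedLineDeriv k f e) x e = iteratedLineDeriv (k + 1) f e x := by
  rw [← lineDeriv_iteratedLineDeriv, ((differentiableOn_iteratedLineDeriv hU hf e
    k).differentiableAt (hU.mem_nhds hx)).lineDeriv_eq_fderiv]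

end IteratedLineDeriv

section RegularZero

variable {E : Type*} [NormedAddCommGroup E] [NormedSpace ℂ E] {f φ : E → ℂ} {U : Set E}
  {a p e : E}

theorem exists_line_not_eventually_eq_zero (hU : IsOpen U) (hf : DifferentiableOn ℂ f U)
    (ha : a ∈ U) (hne : ¬∀ᶠ x in 𝓝 a, f x = 0) : ∃ e : E, ¬∀ᶠ t : ℂ in 𝓝 0, f (a + t • e) = 0 := by
  by_contra! hzero
  obtain ⟨r, hr, hrU⟩ := Metric.isOpen_iff.1 hU a ha
  exact hne <| mem_of_superset (ball_mem_nhds a hr) fun y hy ↦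
    eq_zero_of_eventually_eq_zero_on_line (hf.mono hrU) hy (hzero (y - a))

variable [FiniteDimensional ℂ E]

theorem exists_ball_apply_add_smul_ne (hU : IsOpen U) (hφ : DifferentiableOn ℂ φ U) (hp : p ∈ U)
    (hφp : fderiv ℂ φ p e ≠ 0) :
    ∃ r > 0, ∀ᶠ x in 𝓝 p, ∀ t ∈ ball (0 : ℂ) r, t ≠ 0 → φ (x + t • e) ≠ φ x := by
  have hslope := ((holomorphicLimitOn_slope hU hφ e).2 p hp).eventually_ne hφp
  obtain ⟨⟨r, s⟩, ⟨hr, hs⟩, h⟩ :=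
    (nhdsWithin_basis_ball.prod (𝓝 p).basis_sets).eventually_iff.1 hslope
  refine ⟨r, hr, mem_of_superset hs fun x hx t ht ht0 heq ↦ ?_⟩
  exact h (x := (t, x)) ⟨⟨ht, ht0⟩, hx⟩ (by simp [heq])

theorem eventually_eq_zero_of_transversal (hU : IsOpen U) (hf : DifferentiableOn ℂ f U)
    (hφ : DifferentiableOn ℂ φ U) (hp : p ∈ U) (hfp : f p = 0) (hφp : fderiv ℂ φ p e ≠ 0)
    (hsub : ∀ x ∈ U, f x = 0 → φ x = 0) (hline : ¬∀ᶠ t : ℂ in 𝓝 0, f (p + t • e) = 0) :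
    ∀ᶠ x in 𝓝 p, φ x = 0 → f x = 0 := by
  -- Otherwise `t ↦ f (p + t • e)` is a limit of the functions `t ↦ f (p + v + t • e)` with
  -- `φ (p + v) = 0` and `f (p + v) ≠ 0`, which have no zeros.
  by_contra hfreq
  rw [← map_add_left_nhds_zero p, eventually_map] at hfreq
  let l : Filter E := 𝓝 0 ⊓ 𝓟 {v | φ (p + v) = 0 ∧ f (p + v) ≠ 0}
  have hl : l.NeBot := by
    simpa only [not_eventually, Classical.not_imp, frequently_iff_neBot] using hfreq
  have hadd : Tendsto (p + ·) l (𝓝 p) :=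
    ((continuous_const_add p).tendsto' 0 p (add_zero p)).mono_left inf_le_left
  obtain ⟨r, hr, hball⟩ := exists_ball_apply_add_smul_ne hU hφ hp hφp
  let line : ℂ → E := fun t ↦ p + t • e
  have hdline : Differentiable ℂ line := by fun_prop
  have hlim := ((holomorphicLimitOn_translate hU hf).comp_tendsto (m := l) (u := id)
    (tendsto_inf_left tendsto_id)).comp_right hdline
    (V := line ⁻¹' U ∩ ball 0 r) fun _ ht ↦ ht.1
  refine hline (hlim.eventually_eq_zero ((hU.preimage hdline.continuous).inter isOpen_ball)
    (fun t ht ↦ ?_) ⟨by simpa [line] using hp, mem_ball_self hr⟩ (by simpa [line] using hfp))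
  have hmem : ∀ᶠ q : E × ℂ in l ×ˢ 𝓝 t, p + q.1 + q.2 • e ∈ U := by
    have hU' : p + t • e ∈ U := ht.1
    exact ((hadd.comp tendsto_fst).add (tendsto_snd.smul_const e)).eventually_mem
      (hU.mem_nhds hU')
  have hl_mem : ∀ᶠ v in l, φ (p + v) = 0 ∧ f (p + v) ≠ 0 :=
    eventually_inf_principal.2 (.of_forall fun _ hv ↦ hv)
  filter_upwards [hmem, tendsto_fst.eventually hl_mem, tendsto_snd.eventually_mem
    (isOpen_ball.mem_nhds ht.2), tendsto_fst.eventually (hadd.eventually hball)] with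
    ⟨v, s⟩ hvU ⟨hφv, hfv⟩ hs hne hzero
  have hzero' : f (p + v + s • e) = 0 := by
    rw [add_right_comm]
    exact hzero
  obtain rfl : s = 0 := of_not_not fun hs0 ↦
    hne s hs hs0 ((hsub _ hvU hzero').trans hφv.symm)
  exact hfv (by simpa using hzero')

theorem exists_regular_zero (hU : IsOpen U) (hf : DifferentiableOn ℂ f U) (ha : a ∈ U)
    (hfa : f a = 0) (hne : ¬∀ᶠ x in 𝓝 a, f x = 0) :
    ∃ φ : E → ℂ, ∃ p ∈ U, DifferentiableOn ℂ φ U ∧ φ p = 0 ∧ fderiv ℂ φ p ≠ 0 ∧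
      ∀ᶠ x in 𝓝 p, φ x = 0 → f x = 0 := by
  classical
  obtain ⟨e, he⟩ := exists_line_not_eventually_eq_zero hU hf ha hne
  have hex : ∃ m, ∃ q ∈ U, f q = 0 ∧ iteratedLineDeriv m f e q ≠ 0 := by
    rw [eventually_line_eq_zero_iff_iteratedLineDeriv hU hf ha, not_forall] at he
    exact he.imp fun m hm ↦ ⟨a, ha, hfa, hm⟩
  obtain ⟨p, hp, hfp, hmp⟩ := Nat.find_spec hex
  have hmin : ∀ k < Nat.find hex, ∀ x ∈ U, f x = 0 → iteratedLineDeriv k f e x = 0 := by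
    simpa only [not_exists, not_and, not_not] using fun k ↦ Nat.find_min hex (m := k)
  obtain ⟨k, hk⟩ : ∃ k, Nat.find hex = k + 1 :=
    Nat.exists_eq_succ_of_ne_zero fun h0 ↦ hmp <| by
      rw [h0]
      simpa [iteratedLineDeriv] using hfp
  have hder := fderiv_iteratedLineDeriv_apply hU hf hp e k
  rw [← hk] at hder
  have hφ := differentiableOn_iteratedLineDeriv hU hf e k
  refine ⟨iteratedLineDeriv k f e, p, hp, hφ, hmin k (by lia) p hp hfp,
    fun h0 ↦ hmp (by simp [← hder, h0]), ?_⟩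
  exact eventually_eq_zero_of_transversal hU hf hφ hp hfp (hder ▸ hmp) (hmin k (by lia))
    fun h0 ↦ hmp ((eventually_line_eq_zero_iff_iteratedLineDeriv hU hf hp e).1 h0 _)

end RegularZero

section FiniteDimensional

variable {𝕜 E : Type*} [NontriviallyNormedField 𝕜] [NormedAddCommGroup E] [NormedSpace 𝕜 E]
  [FiniteDimensional 𝕜 E]

theorem det_ne_zero_iff_injective {A : E →L[𝕜] E} : A.det ≠ 0 ↔ Function.Injective A := by
  rw [ContinuousLinearMap.det, ← isUnit_iff_ne_zero, ← LinearMap.isUnit_iff_isUnit_det,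
    LinearMap.isUnit_iff_ker_eq_bot, LinearMap.ker_eq_bot]
  rfl

theorem finrank_ker_add_one {μ : E →L[𝕜] 𝕜} (hμ : μ ≠ 0) :
    Module.finrank 𝕜 μ.ker + 1 = Module.finrank 𝕜 E :=
  Module.Dual.finrank_ker_add_one_of_ne_zero fun h ↦ hμ (ContinuousLinearMap.coe_injective h)

end FiniteDimensional

section LevelSet

variable {E : Type*} [NormedAddCommGroup E] [NormedSpace ℂ E] [FiniteDimensional ℂ E]
  {φ : E → ℂ} {U : Set E} {p : E}

theorem exists_levelSet_parametrization (hU : IsOpen U) (hφ : DifferentiableOn ℂ φ U) (hp : p ∈ U)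
    (hφp : fderiv ℂ φ p ≠ 0) :
    ∃ ψ : (fderiv ℂ φ p).ker → E, ∃ W, IsOpen W ∧ 0 ∈ W ∧ DifferentiableOn ℂ ψ W ∧ InjOn ψ W ∧
      ψ 0 = p ∧ HasFDerivAt ψ (fderiv ℂ φ p).ker.subtypeL 0 ∧
      ∀ w ∈ W, ψ w ∈ U ∧ φ (ψ w) = φ p := by
  have hE : CompleteSpace E := FiniteDimensional.complete ℂ E
  have hstrict := hasStrictFDerivAt_of_differentiableOn hU hφ hp
  have hrange : (fderiv ℂ φ p).range = ⊤ :=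
    LinearMap.range_eq_top.2 <| LinearMap.surjective fun h ↦
      hφp (ContinuousLinearMap.coe_injective h)
  have hker := (fderiv ℂ φ p).ker_closedComplemented_of_finiteDimensional_range
  let D := hstrict.implicitFunctionDataOfComplemented φ (fderiv ℂ φ p) hrange hker
  let ψ := D.implicitFunction (φ p)
  have hDp : D.prodFun D.pt = (φ p, 0) := by simp [D]
  have hpair : Tendsto (fun w : (fderiv ℂ φ p).ker ↦ (φ p, w)) (𝓝 0) (𝓝 (D.prodFun D.pt)) := by
    rw [hDp]
    exact (Continuous.prodMk_right (φ p)).tendsto 0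
  have hψ0 : ψ 0 = p := by
    simpa [D, ψ] using D.implicitFunction_apply_image.self_of_nhds
  have hψ' : HasStrictFDerivAt ψ (fderiv ℂ φ p).ker.subtypeL 0 :=
    hstrict.to_implicitFunctionOfComplemented hrange hker
  have hsmooth : ContDiffAt ℂ 1 ψ 0 := by
    have hφ1 : ContDiffAt ℂ 1 D.leftFun D.pt :=
      (contDiffOn_nat_of_differentiableOn hU hφ 1).contDiffAt (hU.mem_nhds hp)
    have hπ1 : ContDiffAt ℂ 1 D.rightFun D.pt :=
      (Classical.choose hker).contDiff.contDiffAt.comp D.pt (contDiffAt_id.sub contDiffAt_const)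
    have h := D.contDiffAt_implicitFunction hφ1 hπ1 one_ne_zero
    rw [hDp] at h
    exact h.comp (0 : (fderiv ℂ φ p).ker) (contDiffAt_const.prodMk contDiffAt_id)
  have hU' : ∀ᶠ w in 𝓝 0, ψ w ∈ U :=
    hsmooth.continuousAt.eventually_mem (by rw [hψ0]; exact hU.mem_nhds hp)
  obtain ⟨W, hW, hWopen, h0W⟩ := _root_.eventually_nhds_iff.1 <| hU'.and <|
    (hsmooth.eventually (by simp)).and <| hpair.eventually D.prodFun_implicitFunction
  exact ⟨ψ, W, hWopen, h0W,
    fun w hw ↦ ((hW w hw).2.1.differentiableAt one_ne_zero).differentiableWithinAt,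
    fun w hw w' hw' heq ↦ congrArg Prod.snd
      ((hW w hw).2.2.symm.trans ((congrArg D.prodFun heq).trans (hW w' hw').2.2)),
    hψ0, hψ'.hasFDerivAt,
    fun w hw ↦ ⟨(hW w hw).1, congrArg Prod.fst (hW w hw).2.2⟩⟩

end LevelSet

section Osgood

theorem eventually_eq_of_hasFDerivAt_zero {E F : Type*} [NormedAddCommGroup E] [NormedSpace ℂ E]
    [NormedAddCommGroup F] [NormedSpace ℂ F] {f : E → F} {a : E}
    (h : ∀ᶠ x in 𝓝 a, HasFDerivAt f (0 : E →L[ℂ] F) x) : ∀ᶠ x in 𝓝 a, f x = f a := by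
  obtain ⟨r, hr, hball⟩ := Metric.eventually_nhds_iff_ball.1 h
  filter_upwards [ball_mem_nhds a hr] with x hx
  exact isOpen_ball.is_const_of_fderiv_eq_zero (convex_ball a r).isPreconnected
    (fun y hy ↦ (hball y hy).differentiableAt.differentiableWithinAt)
    (fun y hy ↦ (hball y hy).fderiv) hx (mem_ball_self hr)

theorem not_eventually_eq_of_injOn {E F : Type*} [NormedAddCommGroup E] [NormedSpace ℂ E]
    [Nontrivial E] {f : E → F} {U : Set E} {a : E} (hU : IsOpen U) (hf : InjOn f U) (ha : a ∈ U) :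
    ¬∀ᶠ x in 𝓝 a, f x = f a := by
  intro h
  have hnebot : (𝓝[≠] a).NeBot := Module.punctured_nhds_neBot ℂ E a
  have hev : ∀ᶠ x in 𝓝[≠] a, (x ∈ U ∧ f x = f a) ∧ x ≠ a :=
    (((hU.eventually_mem ha).and h).filter_mono nhdsWithin_le_nhds).and eventually_mem_nhdsWithin
  obtain ⟨x, ⟨hxU, hfx⟩, hxa⟩ := hev.exists
  exact hxa (hf hxU ha hfx)

/-- Every injective holomorphic map from an open subset of `E` to `F` is an immersion. Osgood's
theorem is the case of spaces of equal finite dimension. -/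
def OsgoodProperty (E F : Type*) [NormedAddCommGroup E] [NormedSpace ℂ E] [NormedAddCommGroup F]
    [NormedSpace ℂ F] : Prop :=
  ∀ ⦃U : Set E⦄ ⦃f : E → F⦄, IsOpen U → DifferentiableOn ℂ f U → InjOn f U →
    ∀ ⦃a⦄, a ∈ U → Function.Injective (fderiv ℂ f a)

variable {E F G : Type*} [NormedAddCommGroup E] [NormedSpace ℂ E] [NormedAddCommGroup F]
  [NormedSpace ℂ F] [NormedAddCommGroup G] [NormedSpace ℂ G]

theorem OsgoodProperty.of_continuousLinearEquiv (h : OsgoodProperty E F) (e : F ≃L[ℂ] G) :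
    OsgoodProperty E G := by
  intro U f hU hf hinj a ha
  have hcomp := h hU (e.symm.differentiable.comp_differentiableOn hf)
    (e.symm.injective.comp_injOn hinj) ha
  rw [e.symm.comp_fderiv] at hcomp
  exact hcomp.of_comp (f := e.symm)

variable [FiniteDimensional ℂ E] {U : Set E} {a : E}

theorem osgoodProperty_complex : OsgoodProperty E ℂ := by
  intro U f hU hf hinj a ha
  rw [injective_iff_map_eq_zero]
  intro e he
  by_contra he0
  have hslope : ∀ y ∈ U, ∀ᶠ q : ℂ × E in 𝓝[≠] 0 ×ˢ 𝓝 y,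
      q.1⁻¹ • (f (q.2 + q.1 • e) - f q.2) ≠ 0 := by
    intro y hy
    have hadd : Tendsto (fun q : ℂ × E ↦ q.2 + q.1 • e) (𝓝[≠] 0 ×ˢ 𝓝 y) (𝓝 (y + (0 : ℂ) • e)) :=
      tendsto_snd.add ((tendsto_fst.mono_right nhdsWithin_le_nhds).smul_const e)
    have hne : ∀ᶠ q : ℂ × E in 𝓝[≠] 0 ×ˢ 𝓝 y, q.1 ≠ 0 :=
      tendsto_fst.eventually eventually_mem_nhdsWithin
    filter_upwards [hadd.eventually_mem (hU.mem_nhds (by simpa using hy)),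
      tendsto_snd.eventually_mem (hU.mem_nhds hy), hne] with q hq hq' hq0 hzero
    have heq := hinj hq hq' (sub_eq_zero.1 ((smul_eq_zero.1 hzero).resolve_left (inv_ne_zero hq0)))
    simp_all
  have hzero := (holomorphicLimitOn_slope hU hf e).eventually_eq_zero hU hslope ha he
  let line : ℂ → E := fun t ↦ a + t • e
  have hline : ∀ t, HasDerivAt line e t := fun t ↦ by
    simpa [line] using ((hasDerivAt_id t).smul_const e).const_add a
  have hcont : Continuous line := by fun_prop
  have h0 : line 0 = a := by simp [line]
  have hlineinj : InjOn (f ∘ line) (line ⁻¹' U) := hinj.comp (fun t _ s _ hts ↦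
    smul_left_injective ℂ he0 (add_left_cancel hts)) fun _ ht ↦ ht
  refine not_eventually_eq_of_injOn (hU.preimage hcont) hlineinj (a := 0) (by simpa [h0] using ha)
    (eventually_eq_of_hasFDerivAt_zero ?_)
  filter_upwards [(hcont.tendsto' 0 a h0).eventually (hzero.and (hU.eventually_mem ha))] with
    t ⟨hte, htU⟩
  have hcomp := (hf.differentiableAt (hU.mem_nhds htU)).hasFDerivAt.comp_hasDerivAt t (hline t)
  simpa only [hte, ContinuousLinearMap.toSpanSingleton_zero] using hcomp.hasFDerivAt

theorem injective_fderiv_of_ne_zero [FiniteDimensional ℂ F]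
    (hker : ∀ (μ : E →L[ℂ] ℂ) (ν : F →L[ℂ] ℂ), μ ≠ 0 → ν ≠ 0 → OsgoodProperty μ.ker ν.ker)
    {f : E → F} (hU : IsOpen U) (hf : DifferentiableOn ℂ f U) (hinj : InjOn f U) (ha : a ∈ U)
    (hfa : fderiv ℂ f a ≠ 0) : Function.Injective (fderiv ℂ f a) := by
  obtain ⟨v, hv⟩ := DFunLike.ne_iff.1 hfa
  obtain ⟨ν, hν⟩ := SeparatingDual.exists_ne_zero (R := ℂ) hv
  let φ := ν ∘ f
  have hφ : DifferentiableOn ℂ φ U := ν.differentiable.comp_differentiableOn hf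
  have hfda := hf.differentiableAt (hU.mem_nhds ha)
  have hφ' : fderiv ℂ φ a = ν ∘L fderiv ℂ f a := (ν.hasFDerivAt.comp a hfda.hasFDerivAt).fderiv
  have hφa : fderiv ℂ φ a ≠ 0 := fun h ↦ hν <| by
    simpa [hφ'] using congrArg (fun μ : E →L[ℂ] ℂ ↦ μ v) h
  obtain ⟨ψ, W, hW, h0W, hψ, hψinj, hψ0, hψ', hψU⟩ := exists_levelSet_parametrization hU hφ ha hφa
  obtain ⟨P, hP⟩ := ν.ker_closedComplemented_of_finiteDimensional_range
  let k : (fderiv ℂ φ a).ker → ν.ker := fun w ↦ P (f (ψ w) - f a)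
  have hk : ∀ w ∈ W, (k w : F) = f (ψ w) - f a := fun w hw ↦
    congrArg Subtype.val (hP ⟨f (ψ w) - f a, by simpa [φ, sub_eq_zero] using (hψU w hw).2⟩)
  have hkd : DifferentiableOn ℂ k W := P.differentiable.comp_differentiableOn
    ((hf.comp hψ fun w hw ↦ (hψU w hw).1).sub_const (f a))
  have hkinj : InjOn k W := fun w hw w' hw' heq ↦
    hψinj hw hw' <| hinj (hψU w hw).1 (hψU w' hw').1 <| sub_left_injective (b := f a) <| by
      simp only [← hk w hw, ← hk w' hw', heq]
  have hk' : fderiv ℂ k 0 = P ∘L fderiv ℂ f a ∘L (fderiv ℂ φ a).ker.subtypeL := by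
    have hfd : HasFDerivAt f (fderiv ℂ f a) (ψ 0) := by
      rw [hψ0]
      exact hfda.hasFDerivAt
    exact (P.hasFDerivAt.comp 0 ((hfd.comp 0 hψ').sub_const _)).fderiv
  have hkerinj := hker _ ν hφa (fun h ↦ hν (by simp [h])) hW hkd hkinj h0W
  rw [injective_iff_map_eq_zero] at hkerinj ⊢
  intro w hw
  have hwker : w ∈ (fderiv ℂ φ a).ker := by simp [hφ', hw]
  exact congrArg Subtype.val (hkerinj ⟨w, hwker⟩ (by simp [hk', hw]))

theorem fderiv_ne_zero_of_injOn {f : E → F} [FiniteDimensional ℂ F] (hU : IsOpen U)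
    (hf : DifferentiableOn ℂ f U) (hinj : InjOn f U) (hdim : 2 ≤ Module.finrank ℂ E)
    (hdimF : Module.finrank ℂ E = Module.finrank ℂ F)
    (hrank : ∀ x ∈ U, fderiv ℂ f x ≠ 0 → Function.Injective (fderiv ℂ f x)) (ha : a ∈ U) :
    fderiv ℂ f a ≠ 0 := by
  intro hfa
  have hE : Nontrivial E := Module.nontrivial_of_finrank_pos (R := ℂ) (by lia)
  let e : F ≃L[ℂ] E := .ofFinrankEq hdimF.symm
  let h : E → ℂ := fun x ↦ ((e : F →L[ℂ] E) ∘L fderiv ℂ f x).det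
  have hh : DifferentiableOn ℂ h U :=
    ((contDiff_continuousLinearMap_det (n := 1)).differentiable one_ne_zero).comp_differentiableOn
      ((differentiableOn_const _).clm_comp (differentiableOn_fderiv hU hf))
  have hzero : ∀ x ∈ U, h x = 0 ↔ fderiv ℂ f x = 0 := fun x hx ↦ by
    rw [← not_iff_not, ← ne_eq, det_ne_zero_iff_injective]
    refine ⟨?_, fun hfx ↦ e.injective.comp (hrank x hx hfx)⟩
    intro hinjx h0
    obtain ⟨v, hv⟩ := exists_ne (0 : E)
    exact hv (hinjx (by simp [h0]))
  have hne : ¬∀ᶠ x in 𝓝 a, h x = 0 := fun hev ↦ not_eventually_eq_of_injOn hU hinj ha <|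
    eventually_eq_of_hasFDerivAt_zero <| by
      filter_upwards [hev, hU.eventually_mem ha] with x hx hxU
      rw [← (hzero x hxU).1 hx]
      exact (hf.differentiableAt (hU.mem_nhds hxU)).hasFDerivAt
  obtain ⟨φ, p, hp, hφ, hφp, hφ', hφh⟩ := exists_regular_zero hU hh ha ((hzero a ha).2 hfa) hne
  obtain ⟨ψ, W, hW, h0W, hψ, hψinj, hψ0, hψ', hψU⟩ := exists_levelSet_parametrization hU hφ hp hφ'
  have hker : Nontrivial (fderiv ℂ φ p).ker :=
    Module.nontrivial_of_finrank_pos (R := ℂ) (by have := finrank_ker_add_one hφ'; lia)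
  have hcont : Tendsto ψ (𝓝 0) (𝓝 p) := by
    simpa only [hψ0] using hψ'.continuousAt.tendsto
  refine not_eventually_eq_of_injOn (f := f ∘ ψ) hW (hinj.comp hψinj fun w hw ↦ (hψU w hw).1) h0W
    (eventually_eq_of_hasFDerivAt_zero ?_)
  filter_upwards [hW.eventually_mem h0W, hcont.eventually hφh] with w hw hφw
  obtain ⟨hwU, hw0⟩ := hψU w hw
  have hfw := (hf.differentiableAt (hU.mem_nhds hwU)).hasFDerivAt
  rw [(hzero _ hwU).1 (hφw (hw0.trans hφp))] at hfw
  simpa using hfw.comp w (hψ.differentiableAt (hW.mem_nhds hw)).hasFDerivAt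

theorem osgoodProperty_of_finrank_eq {n : ℕ} (hE : Module.finrank ℂ E = n) [FiniteDimensional ℂ F]
    (hF : Module.finrank ℂ F = n) : OsgoodProperty E F := by
  induction n generalizing E F with
  | zero =>
    intro U f _ _ _ a _
    have hsub : Subsingleton E := Module.finrank_zero_iff.1 hE
    exact Function.injective_of_subsingleton _
  | succ n ih =>
    have hker : ∀ (μ : E →L[ℂ] ℂ) (ν : F →L[ℂ] ℂ), μ ≠ 0 → ν ≠ 0 → OsgoodProperty μ.ker ν.ker := by
      intro μ ν hμ hν
      exact ih (by have := finrank_ker_add_one hμ; lia) (by have := finrank_ker_add_one hν; lia)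
    rcases Nat.eq_zero_or_pos n with rfl | hn
    · exact osgoodProperty_complex.of_continuousLinearEquiv (.ofFinrankEq (by simp [hF]))
    · intro U f hU hf hinj a ha
      exact injective_fderiv_of_ne_zero hker hU hf hinj ha <|
        fderiv_ne_zero_of_injOn hU hf hinj (by lia) (by lia)
        (fun x hx hfx ↦ injective_fderiv_of_ne_zero hker hU hf hinj hx hfx) ha

end Osgood

section InverseMapping

variable {E F : Type*} [NormedAddCommGroup E] [NormedSpace ℂ E] [FiniteDimensional ℂ E]
  [NormedAddCommGroup F] [NormedSpace ℂ F] [FiniteDimensional ℂ F] {f : E → F} {g : F → E}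
  {U : Set E} {x : E}

theorem differentiableAt_of_leftInvOn (hdim : Module.finrank ℂ E = Module.finrank ℂ F)
    (hU : IsOpen U) (hf : DifferentiableOn ℂ f U) (hg : LeftInvOn g f U) (hx : x ∈ U) :
    DifferentiableAt ℂ g (f x) := by
  have hE : CompleteSpace E := FiniteDimensional.complete ℂ E
  have hinj : Function.Injective (fderiv ℂ f x) :=
    osgoodProperty_of_finrank_eq hdim rfl hU hf hg.injOn hx
  let A : E ≃L[ℂ] F :=
    (LinearEquiv.ofInjectiveOfFinrankEq (fderiv ℂ f x : E →ₗ[ℂ] F) hinj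
      hdim).toContinuousLinearEquiv
  have hA : HasStrictFDerivAt f (A : E →L[ℂ] F) x :=
    hasStrictFDerivAt_of_differentiableOn hU hf hx
  exact (hA.to_local_left_inverse
    (hg.eqOn.eventuallyEq_of_mem (hU.mem_nhds hx))).hasFDerivAt.differentiableAt

end InverseMapping

theorem range_eq_top_of_det_ne_zero {𝕜 E : Type*} [NontriviallyNormedField 𝕜]
    [NormedAddCommGroup E] [NormedSpace 𝕜 E] [FiniteDimensional 𝕜 E] {A : E →L[𝕜] E}
    (hA : A.det ≠ 0) : A.range = ⊤ :=
  LinearMap.range_eq_top.2 <| LinearMap.injective_iff_surjective.1 <|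
    det_ne_zero_iff_injective.1 hA

namespace HolomorphicLimitOn

section Openness

variable {ι E F : Type*} [NormedAddCommGroup E] [NormedSpace ℂ E] [FiniteDimensional ℂ E]
  [NormedAddCommGroup F] [NormedSpace ℂ F] [CompleteSpace F] {l : Filter ι} [l.NeBot]
  {f : ι → E → F} {g : E → F} {U : Set E} {a : E}

theorem exists_ball_approximatesLinearOn (h : HolomorphicLimitOn l f g U) (hU : IsOpen U)
    (ha : a ∈ U) {c : NNReal} (hc : 0 < c) :
    ∃ r > 0, ∀ᶠ i in l, ApproximatesLinearOn (f i) (fderiv ℂ g a) (ball a r) c := by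
  have hsub : ∀ᶠ p in l ×ˢ 𝓝 a, ‖fderiv ℂ (f p.1) p.2 - fderiv ℂ g a‖ < c := by
    simpa only [mem_ball_iff_norm] using ((h.fderiv hU).tendsto a ha).eventually_mem
      (ball_mem_nhds (fderiv ℂ g a) (NNReal.coe_pos.2 hc))
  obtain ⟨r, hr, hball⟩ := eventually_prod_nhds_iff_ball (P := fun i y ↦
    DifferentiableAt ℂ (f i) y ∧ ‖fderiv ℂ (f i) y - fderiv ℂ g a‖ < c).1 ((h.1 a ha).and hsub)
  let _ : NormedSpace ℝ E := .restrictScalars ℝ ℂ E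
  exact ⟨r, hr, hball.mono fun i hi x hx y hy ↦
    (convex_ball a r).norm_image_sub_le_of_norm_fderiv_le' (fun w hw ↦ (hi w hw).1)
      (fun w hw ↦ (hi w hw).2.le) hy hx⟩

theorem eventually_mem_image (h : HolomorphicLimitOn l f g U) (hU : IsOpen U) (ha : a ∈ U)
    (hsurj : (fderiv ℂ g a).range = ⊤) {V : Set E} (hV : V ∈ 𝓝 a) :
    ∀ᶠ p in l ×ˢ 𝓝 (g a), p.2 ∈ f p.1 '' V := by
  have hE : CompleteSpace E := FiniteDimensional.complete ℂ E
  let R := (fderiv ℂ g a).nonlinearRightInverseOfSurjective hsurj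
  have hR : 0 < R.nnnorm := (fderiv ℂ g a).nonlinearRightInverseOfSurjective_nnnorm_pos hsurj
  obtain ⟨r, hr, happrox⟩ := h.exists_ball_approximatesLinearOn hU ha (half_pos (inv_pos.2 hR))
  obtain ⟨ε, hε, hεV⟩ := nhds_basis_closedBall.mem_iff.1 (inter_mem hV (ball_mem_nhds a hr))
  have hη : 0 < ((R.nnnorm : ℝ)⁻¹ - ↑(R.nnnorm⁻¹ / 2)) * ε := by
    refine mul_pos ?_ hε
    push_cast
    linarith [inv_pos.2 (NNReal.coe_pos.2 hR)]
  have hdist : Tendsto (fun p : ι × F ↦ dist p.2 (f p.1 a)) (l ×ˢ 𝓝 (g a)) (𝓝 0) := by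
    rw [← dist_self (g a)]
    exact tendsto_snd.dist ((h.tendsto_apply ha).comp tendsto_fst)
  filter_upwards [tendsto_fst.eventually happrox, hdist.eventually_lt_const hη] with p hp hlt
  exact image_mono (hεV.trans inter_subset_left) <|
    hp.surjOn_closedBall_of_nonlinearRightInverse R hε.le (hεV.trans inter_subset_right) hlt.le

theorem mapsTo (h : HolomorphicLimitOn l f g U) (hU : IsOpen U)
    (hsurj : ∀ x ∈ U, (fderiv ℂ g x).range = ⊤) {T : Set F}
    (hT : ∀ x ∈ U, ∀ᶠ p in l ×ˢ 𝓝 x, f p.1 p.2 ∈ T) : MapsTo g U T := by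
  intro x hx
  obtain ⟨r, hr, hball⟩ := eventually_prod_nhds_iff_ball (P := fun i y ↦ f i y ∈ T).1 (hT x hx)
  have himage : ∀ᶠ i in l, g x ∈ f i '' ball x r :=
    (h.eventually_mem_image hU hx (hsurj x hx) (ball_mem_nhds x hr)).curry.mono
      fun _ hi ↦ hi.self_of_nhds
  obtain ⟨i, hi, y, hy, hyx⟩ := (hball.and himage).exists
  exact hyx ▸ hi y hy

theorem injOn (h : HolomorphicLimitOn l f g U) (hU : IsOpen U)
    (hsurj : ∀ x ∈ U, (fderiv ℂ g x).range = ⊤) {s : ι → Set E}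
    (hs : ∀ x ∈ U, ∀ᶠ p in l ×ˢ 𝓝 x, p.2 ∈ s p.1) (hinj : ∀ᶠ i in l, InjOn (f i) (s i)) :
    InjOn g U := by
  intro a ha b hb hab
  by_contra hne
  obtain ⟨r, hr, hball⟩ := eventually_prod_nhds_iff_ball (P := fun i y ↦ y ∈ s i).1 (hs a ha)
  have hbs : ∀ᶠ i in l, b ∈ s i := (hs b hb).curry.mono fun _ hi ↦ hi.self_of_nhds
  have hV : ball a r \ {b} ∈ 𝓝 a :=
    inter_mem (ball_mem_nhds a hr) (isOpen_compl_singleton.mem_nhds hne)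
  have hlim : Tendsto (fun i ↦ f i b) l (𝓝 (g a)) := hab ▸ h.tendsto_apply hb
  have himage : ∀ᶠ i in l, f i b ∈ f i '' (ball a r \ {b}) :=
    (tendsto_id.prodMk hlim).eventually (h.eventually_mem_image hU ha (hsurj a ha) hV)
  obtain ⟨i, hi, hib, hiinj, y, ⟨hy, hyb⟩, heq⟩ :=
    (hball.and (hbs.and (hinj.and himage))).exists
  exact hyb (hiinj (hi y hy) hib heq)

end Openness

theorem apply_apply_eq {ι E F : Type*} [NormedAddCommGroup E] [NormedSpace ℂ E]
    [NormedAddCommGroup F] [NormedSpace ℂ F] {l : Filter ι} [l.NeBot] {f : ι → E → F}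
    {g : ι → F → E} {f' : E → F} {g' : F → E} {U : Set E} {B : Set F}
    (hf : HolomorphicLimitOn l f f' U) (hg : HolomorphicLimitOn l g g' B)
    (hfg : ∀ᶠ i in l, RightInvOn (g i) (f i) B) {w : F} (hw : w ∈ B) (hgw : g' w ∈ U) :
    f' (g' w) = w :=
  tendsto_nhds_unique (hf.tendsto_comp hgw (hg.tendsto_apply hw))
    (tendsto_const_nhds.congr' (hfg.mono fun _ hi ↦ (hi hw).symm))

section Endomorphism

variable {ι E : Type*} [NormedAddCommGroup E] [NormedSpace ℂ E] [FiniteDimensional ℂ E]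
  {l : Filter ι} [l.NeBot] {f g : ι → E → E} {F G : E → E} {U B : Set E} {s : ι → Set E}

theorem range_fderiv_eq_top (h : HolomorphicLimitOn l f F U) (hU : IsOpen U)
    (hconn : IsPreconnected U) (hs : ∀ x ∈ U, ∀ᶠ p in l ×ˢ 𝓝 x, p.2 ∈ s p.1)
    (hinj : ∀ᶠ i in l, InjOn (f i) (s i)) {x₀ : E} (hx₀ : x₀ ∈ U)
    (hdet : (fderiv ℂ F x₀).det ≠ 0) : ∀ x ∈ U, (fderiv ℂ F x).range = ⊤ := by
  suffices hne : ∀ x ∈ U, (fderiv ℂ F x).det ≠ 0 from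
    fun x hx ↦ range_eq_top_of_det_ne_zero (hne x hx)
  refine (h.det_fderiv hU).ne_zero_of_isPreconnected hU hconn (fun x hx ↦ ?_) hx₀ hdet
  obtain ⟨r, hr, hball⟩ := eventually_prod_nhds_iff_ball
    (P := fun i y ↦ DifferentiableAt ℂ (f i) y ∧ y ∈ s i).1 ((h.1 x hx).and (hs x hx))
  refine eventually_prod_nhds_iff_ball (P := fun i y ↦ (fderiv ℂ (f i) y).det ≠ 0).2 ⟨r, hr, ?_⟩
  filter_upwards [hball, hinj] with i hi hiinj y hy
  exact det_ne_zero_iff_injective.2 <| osgoodProperty_of_finrank_eq rfl rfl isOpen_ball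
    (fun w hw ↦ (hi w hw).1.differentiableWithinAt) (hiinj.mono fun w hw ↦ (hi w hw).2) hy

theorem mapsTo_connectedComponentIn (h : HolomorphicLimitOn l f F U) (hU : IsOpen U)
    (hconn : IsPreconnected U) (hinj : ∀ᶠ i in l, InjOn (f i) U) {O : Set E}
    (hO : ∀ᶠ i in l, MapsTo (f i) U O) {x₀ : E} (hx₀ : x₀ ∈ U) (hdet : (fderiv ℂ F x₀).det ≠ 0) :
    MapsTo F U (connectedComponentIn O (F x₀)) := by
  have hE : CompleteSpace E := FiniteDimensional.complete ℂ E
  have hmem : ∀ x ∈ U, ∀ᶠ p in l ×ˢ 𝓝 x, p.2 ∈ U := fun x hx ↦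
    tendsto_snd.eventually (hU.eventually_mem hx)
  have hFO : MapsTo F U O := by
    refine h.mapsTo hU (h.range_fderiv_eq_top hU hconn hmem hinj hx₀ hdet) fun x hx ↦ ?_
    filter_upwards [hmem x hx, tendsto_fst.eventually hO] with p hp hpO using hpO hp
  rw [mapsTo_iff_image_subset]
  exact (hconn.image F (h.differentiableOn hU).continuousOn).subset_connectedComponentIn
    (mem_image_of_mem F hx₀) hFO.image_subset

theorem det_fderiv_mul_det_fderiv (hF : HolomorphicLimitOn l f F U)
    (hG : HolomorphicLimitOn l g G B) (hfg : ∀ᶠ i in l, RightInvOn (g i) (f i) B) (hU : IsOpen U)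
    (hB : IsOpen B) {w : E} (hw : w ∈ B) (hGw : G w ∈ U) :
    (fderiv ℂ F (G w)).det * (fderiv ℂ G w).det = 1 := by
  have hE : CompleteSpace E := FiniteDimensional.complete ℂ E
  have hF' := (hF.differentiableOn hU).differentiableAt (hU.mem_nhds hGw)
  have hG' := (hG.differentiableOn hB).differentiableAt (hB.mem_nhds hw)
  have hid : F ∘ G =ᶠ[𝓝 w] id := by
    filter_upwards [hB.mem_nhds hw, hG'.continuousAt.eventually_mem (hU.mem_nhds hGw)] with v hv hGv
    exact hF.apply_apply_eq hG hfg hv hGv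
  have hcomp : fderiv ℂ F (G w) ∘L fderiv ℂ G w = .id ℂ E := by
    rw [← fderiv_comp w hF' hG', hid.fderiv_eq, fderiv_id]
  calc (fderiv ℂ F (G w)).det * (fderiv ℂ G w).det
      = (fderiv ℂ F (G w) ∘L fderiv ℂ G w).det := (LinearMap.det_comp _ _).symm
    _ = 1 := by rw [hcomp]; exact LinearMap.det_id

end Endomorphism

end HolomorphicLimitOn

/-- A holomorphic embedding of `Ω` into the unit ball that sends `z` to the origin and whose image
contains the ball of radius `r`: one of the competitors in the definition of `squeezingFun`, for an
arbitrary complex normed space. -/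
structure IsSqueezingMap {E : Type*} [NormedAddCommGroup E] [NormedSpace ℂ E] (Ω : Set E) (z : E)
    (r : ℝ) (f : E → E) : Prop where
  differentiableOn : DifferentiableOn ℂ f Ω
  injOn : InjOn f Ω
  map_eq_zero : f z = 0
  mapsTo : MapsTo f Ω (ball 0 1)
  surjOn : SurjOn f Ω (ball 0 r)

namespace IsSqueezingMap

section Limit

variable {E : Type*} [NormedAddCommGroup E] [NormedSpace ℂ E] [FiniteDimensional ℂ E] {z : E}
  {r : ℝ}

theorem exists_inverse {Ω : Set E} {f : E → E} (hf : IsSqueezingMap Ω z r f) (hΩ : IsOpen Ω)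
    (hz : z ∈ Ω) : ∃ g, DifferentiableOn ℂ g (ball 0 r) ∧ MapsTo g (ball 0 r) Ω ∧
      RightInvOn g f (ball 0 r) ∧ g 0 = z := by
  have hleft : LeftInvOn (Function.invFunOn f Ω) f Ω := hf.injOn.leftInvOn_invFunOn
  refine ⟨Function.invFunOn f Ω, fun w hw ↦ ?_, hf.surjOn.mapsTo_invFunOn,
    hf.surjOn.rightInvOn_invFunOn, hf.map_eq_zero ▸ hleft hz⟩
  obtain ⟨x, hx, rfl⟩ := hf.surjOn hw
  exact (differentiableAt_of_leftInvOn rfl hΩ hf.differentiableOn hleft hx).differentiableWithinAt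

variable {ι : Type*} {Ω : ι → Set E} {f g : ι → E → E} {F G : E → E}

theorem exists_holomorphicLimitOn {l : Ultrafilter ι} (hΩ : ∀ i, IsOpen (Ω i))
    (hexh : ∀ x ∈ ⋃ i, Ω i, ∀ᶠ p in (l : Filter ι) ×ˢ 𝓝 x, p.2 ∈ Ω p.1)
    (hf : ∀ᶠ i in l, IsSqueezingMap (Ω i) z r (f i)) :
    ∃ F, HolomorphicLimitOn l f F (⋃ i, Ω i) := by
  have hE : ProperSpace E := FiniteDimensional.proper ℂ E
  refine HolomorphicLimitOn.exists_of_bounded (fun x hx ↦ ?_) (fun x hx ↦ ⟨1, ?_⟩) <;>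
    filter_upwards [hexh x hx, tendsto_fst.eventually hf] with p hp hfp
  · exact hfp.differentiableOn.differentiableAt ((hΩ p.1).mem_nhds hp)
  · exact (mem_ball_zero_iff.1 (hfp.mapsTo hp)).le

theorem exists_holomorphicLimitOn_inverse {l : Ultrafilter ι}
    (hbd : Bornology.IsBounded (⋃ i, Ω i))
    (hg : ∀ᶠ i in l, DifferentiableOn ℂ (g i) (ball 0 r) ∧ MapsTo (g i) (ball 0 r) (Ω i)) :
    ∃ G, HolomorphicLimitOn l g G (ball 0 r) := by
  have hE : ProperSpace E := FiniteDimensional.proper ℂ E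
  obtain ⟨M, hM⟩ := hbd.exists_norm_le
  have hball : ∀ w ∈ ball (0 : E) r, ∀ᶠ p in (l : Filter ι) ×ˢ 𝓝 w, p.2 ∈ ball (0 : E) r :=
    fun w hw ↦ tendsto_snd.eventually (isOpen_ball.eventually_mem hw)
  refine HolomorphicLimitOn.exists_of_bounded (fun w hw ↦ ?_) (fun w hw ↦ ⟨M, ?_⟩) <;>
    filter_upwards [hball w hw, tendsto_fst.eventually hg] with p hp hgp
  · exact hgp.1.differentiableAt (isOpen_ball.mem_nhds hp)
  · exact hM _ (mem_iUnion.2 ⟨p.1, hgp.2 hp⟩)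

theorem of_holomorphicLimitOn {l : Filter ι} [l.NeBot] (hΩ : ∀ i, IsOpen (Ω i))
    (hexh : ∀ x ∈ ⋃ i, Ω i, ∀ᶠ p in l ×ˢ 𝓝 x, p.2 ∈ Ω p.1) (hz : z ∈ ⋃ i, Ω i) (hr : 0 < r)
    (hf : ∀ᶠ i in l, IsSqueezingMap (Ω i) z r (f i))
    (hgΩ : ∀ᶠ i in l, MapsTo (g i) (ball 0 r) (Ω i))
    (hfg : ∀ᶠ i in l, RightInvOn (g i) (f i) (ball 0 r)) (hgz : ∀ᶠ i in l, g i 0 = z)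
    (hF : HolomorphicLimitOn l f F (⋃ i, Ω i)) (hG : HolomorphicLimitOn l g G (ball 0 r)) :
    IsSqueezingMap (connectedComponentIn (⋃ i, Ω i) z) z r F := by
  have hE : CompleteSpace E := FiniteDimensional.complete ℂ E
  let _ : NormedSpace ℝ E := .restrictScalars ℝ ℂ E
  set O := ⋃ i, Ω i
  set V := connectedComponentIn O z
  have hO : IsOpen O := isOpen_iUnion hΩ
  have hV : IsOpen V := hO.connectedComponentIn
  have hVO : V ⊆ O := connectedComponentIn_subset O z
  have h0 : (0 : E) ∈ ball 0 r := mem_ball_self hr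
  have hG0 : G 0 = z := tendsto_nhds_unique (hG.tendsto_apply h0)
    (tendsto_const_nhds.congr' (hgz.mono fun _ hi ↦ hi.symm))
  have hdet := hF.det_fderiv_mul_det_fderiv hG hfg hO isOpen_ball h0 (hG0.symm ▸ hz)
  have hGV : MapsTo G (ball 0 r) (connectedComponentIn O (G 0)) :=
    hG.mapsTo_connectedComponentIn isOpen_ball (convex_ball 0 r).isPreconnected
      (hfg.mono fun _ hi ↦ hi.injOn) (hgΩ.mono fun i hi ↦ hi.mono_right (subset_iUnion Ω i)) h0
      (right_ne_zero_of_mul_eq_one hdet)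
  rw [hG0] at hGV
  have hFV : HolomorphicLimitOn l f F V := hF.mono hVO
  have hVΩ : ∀ x ∈ V, ∀ᶠ p in l ×ˢ 𝓝 x, p.2 ∈ Ω p.1 := fun x hx ↦ hexh x (hVO hx)
  have hinj : ∀ᶠ i in l, InjOn (f i) (Ω i) := hf.mono fun _ hi ↦ hi.injOn
  have hsurj : ∀ x ∈ V, (fderiv ℂ F x).range = ⊤ :=
    hFV.range_fderiv_eq_top hV isPreconnected_connectedComponentIn hVΩ hinj
      (mem_connectedComponentIn hz) (hG0 ▸ left_ne_zero_of_mul_eq_one hdet)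
  refine ⟨hFV.differentiableOn hV, hFV.injOn hV hsurj hVΩ hinj,
    hG0 ▸ hF.apply_apply_eq hG hfg h0 (hG0.symm ▸ hz), hFV.mapsTo hV hsurj fun x hx ↦ ?_,
    fun w hw ↦ ⟨G w, hGV hw, hF.apply_apply_eq hG hfg hw (hVO (hGV hw))⟩⟩
  filter_upwards [hVΩ x hx, tendsto_fst.eventually hf] with p hp hfp using hfp.mapsTo hp

theorem exists_connectedComponentIn {l : Filter ι} [l.NeBot] (hΩ : ∀ i, IsOpen (Ω i))
    (hbd : Bornology.IsBounded (⋃ i, Ω i))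
    (hexh : ∀ x ∈ ⋃ i, Ω i, ∀ᶠ p in l ×ˢ 𝓝 x, p.2 ∈ Ω p.1) (hz : z ∈ ⋃ i, Ω i) (hr : 0 < r)
    (hf : ∀ᶠ i in l, ∃ f, IsSqueezingMap (Ω i) z r f) :
    ∃ F, IsSqueezingMap (connectedComponentIn (⋃ i, Ω i) z) z r F := by
  let L := Ultrafilter.of l
  have hL : (L : Filter ι) ≤ l := Ultrafilter.of_le l
  have hexh' : ∀ x ∈ ⋃ i, Ω i, ∀ᶠ p in (L : Filter ι) ×ˢ 𝓝 x, p.2 ∈ Ω p.1 := fun x hx ↦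
    (hexh x hx).filter_mono (Filter.prod_mono_left _ hL)
  obtain ⟨f, hf⟩ := (hf.filter_mono hL).choice
  have hinv : ∀ᶠ i in L, ∃ g, DifferentiableOn ℂ g (ball 0 r) ∧ MapsTo g (ball 0 r) (Ω i) ∧
      RightInvOn g (f i) (ball 0 r) ∧ g 0 = z := by
    filter_upwards [hf, (hexh' z hz).curry] with i hfi hzi
    exact hfi.exists_inverse (hΩ i) hzi.self_of_nhds
  obtain ⟨g, hg⟩ := hinv.choice
  obtain ⟨F, hF⟩ := exists_holomorphicLimitOn hΩ hexh' hf
  obtain ⟨G, hG⟩ := exists_holomorphicLimitOn_inverse hbd (hg.mono fun _ hi ↦ ⟨hi.1, hi.2.1⟩)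
  exact ⟨F, of_holomorphicLimitOn hΩ hexh' hz hr hf (hg.mono fun _ hi ↦ hi.2.1)
    (hg.mono fun _ hi ↦ hi.2.2.1) (hg.mono fun _ hi ↦ hi.2.2.2) hF hG⟩

end Limit
end IsSqueezingMap

theorem isOpen_sdiff_connectedComponentIn {X : Type*} [TopologicalSpace X]
    [LocallyConnectedSpace X] {O : Set X} (hO : IsOpen O) (x : X) :
    IsOpen (O \ connectedComponentIn O x) := by
  refine isOpen_iff_mem_nhds.2 fun y ⟨hyO, hyx⟩ ↦ ?_
  filter_upwards [hO.connectedComponentIn.mem_nhds (mem_connectedComponentIn hyO)] with w hw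
  refine ⟨connectedComponentIn_subset O y hw, fun hwx ↦ hyx ?_⟩
  rw [connectedComponentIn_eq hwx, ← connectedComponentIn_eq hw]
  exact mem_connectedComponentIn hyO

theorem exists_affine_mapsTo_ball_sdiff_ball {E : Type*} [NormedAddCommGroup E] [NormedSpace ℂ E]
    [Nontrivial E] {s : Set E} (hs : Bornology.IsBounded s) {t : ℝ} (ht0 : 0 ≤ t) (ht1 : t < 1) :
    ∃ A : E → E, Differentiable ℂ A ∧ Function.Injective A ∧
      MapsTo A s (ball 0 1 \ ball 0 t) := by
  obtain ⟨R, hR, hsR⟩ := hs.exists_pos_norm_lt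
  obtain ⟨c, hc⟩ : ∃ c : E, ‖c‖ = (1 + t) / 2 := by
    let _ : NormedSpace ℝ E := .restrictScalars ℝ ℂ E
    exact exists_norm_eq E (by positivity)
  have hκ : 0 < (1 - t) / 2 / R := div_pos (by linarith) hR
  set κ := (1 - t) / 2 / R with hκdef
  have hκ0 : (κ : ℂ) ≠ 0 := Complex.ofReal_ne_zero.2 hκ.ne'
  refine ⟨fun x ↦ c + (κ : ℂ) • x, by fun_prop,
    (add_right_injective c).comp (smul_right_injective E hκ0), fun x hx ↦ ?_⟩
  have hκx : ‖(κ : ℂ) • x‖ < (1 - t) / 2 := by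
    rw [norm_smul, Complex.norm_real, Real.norm_of_nonneg hκ.le, hκdef, div_mul_comm]
    exact mul_lt_of_lt_one_left (by linarith) ((div_lt_one hR).2 (hsR x hx))
  have hupper : ‖c + (κ : ℂ) • x‖ ≤ ‖c‖ + ‖(κ : ℂ) • x‖ := norm_add_le _ _
  have hlower : ‖c‖ - ‖(κ : ℂ) • x‖ ≤ ‖c + (κ : ℂ) • x‖ := norm_sub_le_norm_add _ _
  rw [Set.mem_sdiff, mem_ball_zero_iff, mem_ball_zero_iff]
  constructor <;> linarith

namespace IsSqueezingMap

section Glue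

variable {E : Type*} [NormedAddCommGroup E] [NormedSpace ℂ E] {V W S : Set E} {z : E} {r t : ℝ}
  {f g : E → E}

theorem mapsTo_smul_ball (hf : IsSqueezingMap V z r f) (ht0 : 0 < t) :
    MapsTo ((t : ℂ) • f) V (ball 0 t) := by
  intro x hx
  rw [mem_ball_zero_iff, Pi.smul_apply, norm_smul, Complex.norm_real, Real.norm_of_nonneg ht0.le]
  exact mul_lt_of_lt_one_right ht0 (mem_ball_zero_iff.1 (hf.mapsTo hx))

theorem smul (hf : IsSqueezingMap V z r f) (ht0 : 0 < t) (ht1 : t ≤ 1) :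
    IsSqueezingMap V z (t * r) ((t : ℂ) • f) where
  differentiableOn := hf.differentiableOn.const_smul _
  injOn := (smul_right_injective E (Complex.ofReal_ne_zero.2 ht0.ne')).comp_injOn hf.injOn
  map_eq_zero := by rw [Pi.smul_apply, hf.map_eq_zero, smul_zero]
  mapsTo := (hf.mapsTo_smul_ball ht0).mono_right (ball_subset_ball ht1)
  surjOn := by
    intro w hw
    have ht : (t : ℂ) ≠ 0 := Complex.ofReal_ne_zero.2 ht0.ne'
    have hw' : (t : ℂ)⁻¹ • w ∈ ball 0 r := by
      rw [mem_ball_zero_iff] at hw ⊢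
      rwa [norm_smul, norm_inv, Complex.norm_real, Real.norm_of_nonneg ht0.le,
        inv_mul_lt_iff₀ ht0]
    obtain ⟨x, hx, hxw⟩ := hf.surjOn hw'
    exact ⟨x, hx, by rw [Pi.smul_apply, hxw, smul_inv_smul₀ ht]⟩

open scoped Classical in
theorem piecewise (hf : IsSqueezingMap V z r f) (hV : IsOpen V) (hW : IsOpen W)
    (hVW : Disjoint V W) (hz : z ∈ V) (hfS : MapsTo f V S) (hg : DifferentiableOn ℂ g W)
    (hginj : InjOn g W) (hgS : MapsTo g W (ball 0 1 \ S)) :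
    IsSqueezingMap (V ∪ W) z r (V.piecewise f g) := by
  have hfV : EqOn (V.piecewise f g) f V := V.piecewise_eqOn f g
  have hgW : EqOn (V.piecewise f g) g W :=
    (V.piecewise_eqOn_compl f g).mono hVW.subset_compl_left
  refine ⟨(hf.differentiableOn.congr hfV).union_of_isOpen (hg.congr hgW) hV hW,
    (injOn_union hVW).2 ⟨hf.injOn.congr hfV.symm, hginj.congr hgW.symm, fun x hx y hy hxy ↦ ?_⟩,
    (hfV hz).trans hf.map_eq_zero,
    union_self (ball (0 : E) 1) ▸ (hf.mapsTo.congr hfV.symm).union_union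
      ((hgS.mono_right sdiff_subset).congr hgW.symm),
    (hf.surjOn.congr hfV.symm).mono subset_union_left subset_rfl⟩
  rw [hfV hx, hgW hy] at hxy
  exact (hgS hy).2 (hxy ▸ hfS hx)

theorem exists_of_isOpen_sdiff [Nontrivial E] {O : Set E} (hf : IsSqueezingMap V z r f)
    (hO : Bornology.IsBounded O) (hV : IsOpen V) (hVO : V ⊆ O) (hOV : IsOpen (O \ V))
    (hz : z ∈ V) (ht0 : 0 < t) (ht1 : t < 1) : ∃ F, IsSqueezingMap O z (t * r) F := by
  classical
  obtain ⟨A, hA, hAinj, hAO⟩ := exists_affine_mapsTo_ball_sdiff_ball hO ht0.le ht1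
  rw [← union_sdiff_cancel hVO]
  exact ⟨_, (hf.smul ht0 ht1.le).piecewise hV hOV disjoint_sdiff_right hz
    (hf.mapsTo_smul_ball ht0) hA.differentiableOn hAinj.injOn (hAO.mono_left sdiff_subset)⟩

end Glue

end IsSqueezingMap

section SqueezingFun

variable {n : ℕ} {Ω : Set (EuclideanSpace ℂ (Fin n))} {z : EuclideanSpace ℂ (Fin n)} {r : ℝ}

theorem squeezingFun_eq_sSup :
    squeezingFun Ω z = sSup {r | 0 < r ∧ ∃ f, IsSqueezingMap Ω z r f} := by
  refine congrArg sSup (Set.ext fun r ↦ and_congr_right fun _ ↦ exists_congr fun f ↦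
    ⟨fun ⟨hd, hinj, hz, hm, hs⟩ ↦ ⟨hd, hinj, hz, mapsTo_iff_image_subset.2 hm, hs⟩,
      fun h ↦ ⟨h.differentiableOn, h.injOn, h.map_eq_zero, h.mapsTo.image_subset, h.surjOn⟩⟩)

theorem exists_isSqueezingMap_of_lt_squeezingFun (hr : 0 ≤ r) (h : r < squeezingFun Ω z) :
    ∃ f, IsSqueezingMap Ω z r f := by
  rw [squeezingFun_eq_sSup] at h
  have hne : {r | 0 < r ∧ ∃ f, IsSqueezingMap Ω z r f}.Nonempty := by
    by_contra hempty
    rw [not_nonempty_iff_eq_empty.1 hempty, Real.sSup_empty] at h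
    exact hr.not_gt h
  obtain ⟨ρ, ⟨-, f, hf⟩, hrρ⟩ := exists_lt_of_lt_csSup hne h
  exact ⟨f, { hf with surjOn := hf.surjOn.mono subset_rfl (ball_subset_ball hrρ.le) }⟩

theorem IsSqueezingMap.le_one {E : Type*} [NormedAddCommGroup E] [NormedSpace ℂ E] [Nontrivial E]
    {Ω : Set E} {z : E} {r : ℝ} {f : E → E} (hf : IsSqueezingMap Ω z r f) : r ≤ 1 := by
  let _ : NormedSpace ℝ E := .restrictScalars ℝ ℂ E
  obtain ⟨w, hw⟩ := exists_norm_eq E zero_le_one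
  by_contra! hr
  obtain ⟨x, hx, rfl⟩ := hf.surjOn (mem_ball_zero_iff.2 (hw.trans_lt hr))
  exact (mem_ball_zero_iff.1 (hf.mapsTo hx)).ne hw

theorem IsSqueezingMap.le_squeezingFun [NeZero n]
    {f : EuclideanSpace ℂ (Fin n) → EuclideanSpace ℂ (Fin n)} (hf : IsSqueezingMap Ω z r f)
    (hr : 0 < r) : r ≤ squeezingFun Ω z := by
  rw [squeezingFun_eq_sSup]
  exact le_csSup ⟨1, fun _ ⟨_, _, hf⟩ ↦ hf.le_one⟩ ⟨hr, f, hf⟩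

/-- Every radius is admissible in dimension zero, and `sSup` of an unbounded set of reals is `0`. -/
theorem squeezingFun_eq_zero_of_subsingleton [Subsingleton (EuclideanSpace ℂ (Fin n))]
    (hz : z ∈ Ω) : squeezingFun Ω z = 0 := by
  rw [squeezingFun_eq_sSup]
  refine Real.sSup_of_not_bddAbove fun hbdd ↦ not_bddAbove_Ioi (0 : ℝ) (hbdd.mono fun r hr ↦ ?_)
  exact ⟨hr, id, differentiableOn_id, injOn_id Ω, Subsingleton.elim _ _,
    fun x _ ↦ Subsingleton.elim 0 x ▸ mem_ball_self one_pos,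
    fun w _ ↦ ⟨z, hz, Subsingleton.elim _ _⟩⟩

theorem le_squeezingFun_of_connectedComponentIn [NeZero n] (hΩ : IsOpen Ω)
    (hbd : Bornology.IsBounded Ω) (hz : z ∈ Ω) (hr : 0 < r)
    {f : EuclideanSpace ℂ (Fin n) → EuclideanSpace ℂ (Fin n)}
    (hf : IsSqueezingMap (connectedComponentIn Ω z) z r f) : r ≤ squeezingFun Ω z := by
  have hle : ∀ᶠ t : ℝ in 𝓝[<] 1, t * r ≤ squeezingFun Ω z := by
    filter_upwards [Ioo_mem_nhdsLT zero_lt_one] with t ⟨ht0, ht1⟩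
    obtain ⟨F, hF⟩ := hf.exists_of_isOpen_sdiff hbd hΩ.connectedComponentIn
      (connectedComponentIn_subset Ω z) (isOpen_sdiff_connectedComponentIn hΩ z)
      (mem_connectedComponentIn hz) ht0 ht1
    exact hF.le_squeezingFun (mul_pos ht0 hr)
  have hlim : Tendsto (fun t : ℝ ↦ t * r) (𝓝[<] 1) (𝓝 (1 * r)) :=
    (continuous_mul_const r).continuousWithinAt
  exact one_mul r ▸ le_of_tendsto hlim hle

end SqueezingFun

theorem eventually_mem_of_mem_iUnion_of_monotone {ι X : Type*} [Preorder ι] [TopologicalSpace X]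
    {Ω : ι → Set X} (hΩ : ∀ i, IsOpen (Ω i)) (hmono : Monotone Ω) {x : X}
    (hx : x ∈ ⋃ i, Ω i) : ∀ᶠ p in atTop ×ˢ 𝓝 x, p.2 ∈ Ω p.1 := by
  obtain ⟨i, hi⟩ := mem_iUnion.1 hx
  filter_upwards [prod_mem_prod (mem_atTop i) ((hΩ i).mem_nhds hi)] with p ⟨hp, hpx⟩
  exact hmono hp hpx

theorem squeezing_of_exhaustion_general {ι : Type*} [Preorder ι] [IsDirectedOrder ι] {n : ℕ}
    (Ω : ι → Set (EuclideanSpace ℂ (Fin n))) (hopen : ∀ j, IsOpen (Ω j)) (hmono : Monotone Ω)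
    (hbd : Bornology.IsBounded (⋃ j, Ω j)) (z : EuclideanSpace ℂ (Fin n)) (hz : z ∈ ⋃ j, Ω j)
    (δ : ℝ) (hδ : δ < 1) (hsq : ∀ᶠ j in atTop, squeezingFun (Ω j) z > 1 - δ) :
    squeezingFun (⋃ j, Ω j) z ≥ 1 - δ := by
  have hr : 0 < 1 - δ := sub_pos.2 hδ
  obtain ⟨j₀, hj₀⟩ := mem_iUnion.1 hz
  have : Nonempty ι := ⟨j₀⟩
  obtain rfl | hn := eq_or_ne n 0
  · obtain ⟨j, hj, hj₀j⟩ := (hsq.and (eventually_ge_atTop j₀)).exists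
    exact absurd hj (squeezingFun_eq_zero_of_subsingleton (hmono hj₀j hj₀) ▸ hr.not_gt)
  have : NeZero n := ⟨hn⟩
  have hf : ∀ᶠ j in atTop, ∃ f, IsSqueezingMap (Ω j) z (1 - δ) f :=
    hsq.mono fun j hj ↦ exists_isSqueezingMap_of_lt_squeezingFun hr.le hj
  obtain ⟨F, hF⟩ := IsSqueezingMap.exists_connectedComponentIn hopen hbd
    (fun x hx ↦ eventually_mem_of_mem_iUnion_of_monotone hopen hmono hx) hz hr hf
  exact le_squeezingFun_of_connectedComponentIn (isOpen_iUnion hopen) hbd hz hr hF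

/-- If Ω_j is an increasing sequence of open sets with bounded union Ω,
z ∈ Ω, δ ∈ (0,1), and S_{Ω_j}(z) > 1 - δ whenever z ∈ Ω_j, then S_Ω(z) ≥ 1 - δ. -/
theorem squeezing_of_exhaustion {n : ℕ}
    (Ω : ℕ → Set (EuclideanSpace ℂ (Fin n)))
    (hopen : ∀ j, IsOpen (Ω j))
    (hmono : ∀ j, Ω j ⊆ Ω (j + 1))
    (hbd : Bornology.IsBounded (⋃ j, Ω j))
    (z : EuclideanSpace ℂ (Fin n)) (hz : z ∈ ⋃ j, Ω j)
    (δ : ℝ) (hδ0 : 0 < δ) (hδ1 : δ < 1)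
    (hsq : ∀ j, z ∈ Ω j → squeezingFun (Ω j) z > 1 - δ) :
    squeezingFun (⋃ j, Ω j) z ≥ 1 - δ := by
  have hmono' : Monotone Ω := monotone_nat_of_le_succ hmono
  obtain ⟨j₀, hj₀⟩ := mem_iUnion.1 hz
  exact squeezing_of_exhaustion_general Ω hopen hmono' hbd z hz δ hδ1 <|
    (eventually_ge_atTop j₀).mono fun j hj ↦ hsq j (hmono' hj hj₀)
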